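/- arXiv:1111.5458 — 2 statements merged into one kernel-verified Lean document; each statement's English description precedes it below -/
import Mathlib

section
/- Let G be a complete multipartite graph with every part of size at most 3, with k₁ parts of size 1, k₂ parts of size 2 and k₃ parts of size 3, and suppose |V(G)| ≤ 2χ(G) where χ(G) = k₁ + k₂ + k₃. Then the constant function f ≡ χ(G) satisfies all hypotheses of the main technical lemma with 𝒮 = ∅ (namely: f(v) ≥ k₃ + k₂ + i for the i-th part of size 1; f(v) ≥ k₃ + k₂ for every vertex in a part of size 2 or 3; Σ_{v∈B} f(v) ≥ |V(G)| for every part B of size 2; f(u) + f(v) ≥ |V(G)| − 1 for distinct u, v in a part of size 3; and Σ_{v∈C} f(v) ≥ |V(G)| − 1 + k₃ + k₂ + k₁ for every part C of size 3), and consequently G is on-line χ(G)-choosable. -/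
variable {V : Type} [Fintype V] [DecidableEq V]

/-- Approximations to on-line `f`-choosability of the subgraph of `G` induced on `S`:
`OnlineChoosableAux G n S f` says that the defining recursion certifies choosability
within `n` unfoldings. -/
def OnlineChoosableAux (G : SimpleGraph V) : ℕ → Finset V → (V → ℕ) → Prop
  | 0, _S, _f => False
  | n + 1, S, f =>
      ((∀ u ∈ S, ∀ v ∈ S, ¬ G.Adj u v) ∧ ∀ v ∈ S, 1 ≤ f v) ∨
      ((∃ u ∈ S, ∃ v ∈ S, G.Adj u v) ∧
        ∀ U : Finset V, U ⊆ S → U.Nonempty →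
          ∃ I : Finset V, I ⊆ U ∧ (∀ u ∈ I, ∀ v ∈ I, ¬ G.Adj u v) ∧
            OnlineChoosableAux G n (S \ I) (fun v => f v - if v ∈ U then 1 else 0))

/-- The subgraph of `G` induced on `S` is on-line `f`-choosable: the least fixed point of
the recursion “if edgeless then `f ≥ 1` everywhere, else for every nonempty `U ⊆ S`
there is an independent `I ⊆ U` with `G - I` on-line `(f - δ_U)`-choosable”. -/
def OnlineChoosable (G : SimpleGraph V) (S : Finset V) (f : V → ℕ) : Prop :=
  ∃ n, OnlineChoosableAux G n S f

/-!
The hypotheses of the technical lemma are an invariant of the game. When `U` is presented, a part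
of size two or three in need of attention is served first: one covered by `U`, or one in which
paying for `U` would break the lower bound on two budgets (its remaining vertex joins the end of
`𝒜`) or on a single budget (its remaining vertices join the end of `𝒮`). Otherwise colour `X ∩ U`,
where `X` is the first part meeting `U` in this order: `𝒜`, parts of size three with two vertices
in `U`, parts of size three with one, `𝒮`, parts of size two. The uncoloured vertices of a part of
size three or two were then not charged, so one of them goes to the front of `𝒜`, and two of them
form a new part of size two. Each time, the drop in the number of vertices or of parts relaxes
the bounds by at least what was spent on `U`.
-/

section Development

open Finset

variable {α : Type*} {f g : α → ℕ}

/-- Every vertex of a part in the list has budget exceeding `c` plus the number of vertices in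
the earlier parts. This is the hypothesis on the ordered families `𝒜` and `𝒮`. -/
def IsStaircase (f : α → ℕ) : ℕ → List (Finset α) → Prop
  | _, [] => True
  | c, X :: l => (∀ v ∈ X, c < f v) ∧ IsStaircase f (c + #X) l

namespace IsStaircase

variable {c c' : ℕ} {l : List (Finset α)}

theorem of_le (h : IsStaircase f c l) (hle : ∀ X ∈ l, ∀ v ∈ X, f v + c' ≤ g v + c) :
    IsStaircase g c' l := by
  induction l generalizing c c' with
  | nil => trivial
  | cons X l ih =>
    rw [List.forall_mem_cons] at hle
    refine ⟨fun v hv => ?_, ih h.2 fun Y hY v hv => ?_⟩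
    · have := h.1 v hv
      have := hle.1 v hv
      omega
    · have := hle.2 Y hY v hv
      omega

theorem concat {Y : Finset α} (h : IsStaircase f c l)
    (hY : ∀ v ∈ Y, c + (l.map card).sum < f v) : IsStaircase f c (l ++ [Y]) := by
  induction l generalizing c with
  | nil => exact ⟨by simpa using hY, trivial⟩
  | cons X l ih => exact ⟨h.1, ih h.2 (by simpa [add_assoc] using hY)⟩

theorem pos (h : IsStaircase f c l) : ∀ X ∈ l, ∀ v ∈ X, 0 < f v := by
  induction l generalizing c with
  | nil => simp
  | cons X l ih => exact List.forall_mem_cons.2 ⟨fun v hv => c.zero_le.trans_lt (h.1 v hv), ih h.2⟩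

theorem of_card_eq_one (hcard : ∀ X ∈ l, #X = 1)
    (hf : ∀ (i : ℕ) (hi : i < l.length), ∀ v ∈ l[i], c + i < f v) : IsStaircase f c l := by
  induction l generalizing c with
  | nil => trivial
  | cons X l ih =>
    rw [List.forall_mem_cons] at hcard
    refine ⟨hf 0 (by simp), ih hcard.2 fun i hi v hv => ?_⟩
    have := hf (i + 1) (by simpa using hi) v hv
    omega

end IsStaircase

/-- `G` restricted to `T` is complete multipartite with the members of `M` as its parts. The
first field makes the members of `M` a partition of `T`, except that empty members are allowed:
parts are kept when the play exhausts them. -/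
structure IsMultipartition (G : SimpleGraph α) (T : Finset α) (M : Multiset (Finset α)) :
    Prop where
  bind_val : M.bind Finset.val = T.val
  adj_iff : ∀ X ∈ M, ∀ u ∈ X, ∀ v ∈ T, G.Adj u v ↔ v ∉ X

namespace IsMultipartition

variable {G : SimpleGraph α} {T X I : Finset α} {M : Multiset (Finset α)}

theorem mem_iff (h : IsMultipartition G T M) {v : α} : v ∈ T ↔ ∃ X ∈ M, v ∈ X := by
  simp only [← mem_val, ← h.bind_val, Multiset.mem_bind]

theorem subset (h : IsMultipartition G T M) (hX : X ∈ M) : X ⊆ T :=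
  fun _ hv => h.mem_iff.2 ⟨X, hX, hv⟩

theorem not_adj (h : IsMultipartition G T M) (hX : X ∈ M) (hI : I ⊆ X) :
    ∀ u ∈ I, ∀ v ∈ I, ¬ G.Adj u v := fun u hu v hv hadj =>
  (h.adj_iff X hX u (hI hu) v (h.subset hX (hI hv))).1 hadj (hI hv)

theorem of_fibers {ι : Type*} [Fintype α] [Fintype ι] [DecidableEq ι] {P : α → ι}
    (hG : ∀ u v, G.Adj u v ↔ P u ≠ P v) :
    IsMultipartition G univ ((univ : Finset ι).val.map fun i => univ.filter fun v => P v = i) where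
  bind_val := by
    rw [Multiset.bind_map]
    exact congrArg val (disjiUnion_filter_eq_of_maps_to fun v _ => mem_univ (P v))
  adj_iff X hX u hu v _ := by
    obtain ⟨i, -, rfl⟩ := Multiset.mem_map.1 hX
    rw [mem_filter] at hu
    simp [hG, hu.2, eq_comm]

end IsMultipartition

/-- The hypotheses of the technical lemma on the parts of size two (`B`) and three (`C`). There
`k` is the number of these parts, `N` the number of vertices and `m` the number of these parts
plus the number of vertices in parts of size one; the paper's `N - 1` appears as `+ 1` on the
other side. -/
structure IsBalanced (k N m : ℕ) (f : α → ℕ) (B C : Multiset (Finset α)) : Prop where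
  card_pair : ∀ X ∈ B, #X = 2
  card_triple : ∀ X ∈ C, #X = 3
  le : ∀ X ∈ B + C, ∀ v ∈ X, k ≤ f v
  le_sum_pair : ∀ X ∈ B, N ≤ ∑ v ∈ X, f v
  le_add : ∀ X ∈ C, ∀ u ∈ X, ∀ v ∈ X, u ≠ v → N ≤ f u + f v + 1
  le_sum_triple : ∀ X ∈ C, N + m ≤ ∑ v ∈ X, f v + 1

namespace IsBalanced

variable {k N m : ℕ} {B B' C C' : Multiset (Finset α)} {X : Finset α}

theorem mono (h : IsBalanced k N m f B C) (hB : B' ⊆ B) (hC : C' ⊆ C) :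
    IsBalanced k N m f B' C' where
  card_pair X hX := h.card_pair X (hB hX)
  card_triple X hX := h.card_triple X (hC hX)
  le X hX := h.le X (Multiset.mem_add.2 ((Multiset.mem_add.1 hX).imp (@hB X) (@hC X)))
  le_sum_pair X hX := h.le_sum_pair X (hB hX)
  le_add X hX := h.le_add X (hC hX)
  le_sum_triple X hX := h.le_sum_triple X (hC hX)

theorem cons_pair (h : IsBalanced k N m f B C) (hcard : #X = 2) (hle : ∀ v ∈ X, k ≤ f v)
    (hsum : N ≤ ∑ v ∈ X, f v) : IsBalanced k N m f (X ::ₘ B) C where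
  card_pair := Multiset.forall_mem_cons.2 ⟨hcard, h.card_pair⟩
  card_triple := h.card_triple
  le := by
    rw [Multiset.cons_add]
    exact Multiset.forall_mem_cons.2 ⟨hle, h.le⟩
  le_sum_pair := Multiset.forall_mem_cons.2 ⟨hsum, h.le_sum_pair⟩
  le_add := h.le_add
  le_sum_triple := h.le_sum_triple

end IsBalanced

/-- The hypotheses of the technical lemma for the subgraph of `G` on the remaining vertices `T`
with budgets `f`: its parts are those in `A` (the ordered family of parts of size one), `B` (of
size two), `C` (of size three) and `S` (the ordered family `𝒮`). Sizes in `A` and `S` are not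
prescribed, since exhausted parts stay there as empty sets and the staircases count vertices. -/
structure IsFeasible (G : SimpleGraph α) (T : Finset α) (f : α → ℕ) (A : List (Finset α))
    (B C : Multiset (Finset α)) (S : List (Finset α)) : Prop where
  parts : IsMultipartition G T (A + B + C + S)
  singles : IsStaircase f (C.card + B.card) A
  balanced : IsBalanced (C.card + B.card) #T (C.card + B.card + (A.map card).sum) f B C
  reserve : IsStaircase f (2 * C.card + B.card + (A.map card).sum) S

namespace IsFeasible

variable {G : SimpleGraph α} {T X : Finset α} {A : List (Finset α)} {B C : Multiset (Finset α)}
  {S : List (Finset α)}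

theorem card_eq (h : IsFeasible G T f A B C S) :
    #T = 3 * C.card + 2 * B.card + (A.map card).sum + (S.map card).sum := by
  have hB : (B.map card).sum = B.card * 2 := by
    rw [Multiset.map_congr rfl h.balanced.card_pair, Multiset.map_const', Multiset.sum_replicate,
      smul_eq_mul]
  have hC : (C.map card).sum = C.card * 3 := by
    rw [Multiset.map_congr rfl h.balanced.card_triple, Multiset.map_const', Multiset.sum_replicate,
      smul_eq_mul]
  have hT : #T = ((A + B + C + S : Multiset (Finset α)).map card).sum := by
    rw [← card_val, ← h.parts.bind_val, Multiset.card_bind]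
    rfl
  simp only [Multiset.map_add, Multiset.sum_add, Multiset.map_coe, Multiset.sum_coe] at hT
  omega

theorem pos (h : IsFeasible G T f A B C S) : ∀ v ∈ T, 1 ≤ f v := by
  intro v hv
  obtain ⟨X, hX, hvX⟩ := h.parts.mem_iff.1 hv
  simp only [Multiset.mem_add, Multiset.mem_coe] at hX
  rcases hX with ((hX | hX) | hX) | hX
  · exact h.singles.pos X hX v hvX
  · have := h.balanced.le X (Multiset.mem_add.2 (.inl hX)) v hvX
    have := Multiset.card_pos_iff_exists_mem.2 ⟨X, hX⟩
    omega
  · have := h.balanced.le X (Multiset.mem_add.2 (.inr hX)) v hvX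
    have := Multiset.card_pos_iff_exists_mem.2 ⟨X, hX⟩
    omega
  · exact h.reserve.pos X hX v hvX

theorem parts_pair (h : IsFeasible G T f A (X ::ₘ B) C S) :
    IsMultipartition G T (X ::ₘ (A + B + C + S)) := by
  simpa only [Multiset.add_cons, Multiset.cons_add] using h.parts

theorem parts_triple (h : IsFeasible G T f A B (X ::ₘ C) S) :
    IsMultipartition G T (X ::ₘ (A + B + C + S)) := by
  simpa only [Multiset.add_cons, Multiset.cons_add] using h.parts

end IsFeasible

theorem coe_append_cons (l₁ l₂ : List (Finset α)) (X : Finset α) :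
    ((l₁ ++ X :: l₂ : List (Finset α)) : Multiset (Finset α)) =
      X ::ₘ (l₁ ++ l₂ : List (Finset α)) :=
  Multiset.coe_eq_coe.2 List.perm_middle

section Round

variable [DecidableEq α] {U : Finset α}

/-- The budgets left after the round in which the set `U` was presented; truncation at `0` is
inherited from the recursion defining on-line choosability. -/
def spend (U : Finset α) (f : α → ℕ) (v : α) : ℕ := f v - if v ∈ U then 1 else 0

theorem spend_of_notMem {v : α} (hv : v ∉ U) : spend U f v = f v := by simp [spend, hv]

theorem le_spend_add_one (U : Finset α) (f : α → ℕ) (v : α) : f v ≤ spend U f v + 1 := by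
  unfold spend
  split_ifs <;> omega

theorem mem_of_spend_lt {v : α} (hv : spend U f v < f v) : v ∈ U := by
  by_contra hvU
  exact hv.ne (spend_of_notMem hvU)

theorem card_inter_lt_of_not_subset {X : Finset α} (h : ¬ X ⊆ U) : #(X ∩ U) < #X :=
  card_lt_card (inter_subset_left.ssubset_of_ne fun heq => h (inter_eq_left.1 heq))

theorem sum_le_sum_spend_add_card_inter (U : Finset α) (f : α → ℕ) (X : Finset α) :
    ∑ v ∈ X, f v ≤ ∑ v ∈ X, spend U f v + #(X ∩ U) := by
  rw [← filter_mem_eq_inter, card_filter, ← sum_add_distrib]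
  exact sum_le_sum fun v _ => by unfold spend; omega

namespace IsStaircase

variable {c c' : ℕ} {l : List (Finset α)}

theorem spend_of_lt (h : IsStaircase f c l) (hc : c' < c) : IsStaircase (spend U f) c' l :=
  h.of_le fun _ _ v _ => by
    have := le_spend_add_one U f v
    omega

theorem spend_of_disjoint (h : IsStaircase f c l) (hc : c' ≤ c) (hU : ∀ X ∈ l, Disjoint X U) :
    IsStaircase (spend U f) c' l :=
  h.of_le fun X hX v hv => by
    rw [spend_of_notMem (disjoint_left.1 (hU X hX) hv)]
    omega

-- Shrinking the first part that meets `U` releases at least one unit for all later parts.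
theorem exists_shrink (h : IsStaircase f c l) (hU : ∃ X ∈ l, ¬ Disjoint X U) :
    ∃ l₁ X l₂, l = l₁ ++ X :: l₂ ∧ (X ∩ U).Nonempty ∧
      IsStaircase (spend U f) c (l₁ ++ (X \ U) :: l₂) := by
  induction l generalizing c with
  | nil => simp at hU
  | cons Y l ih =>
    by_cases hY : Disjoint Y U
    · obtain ⟨l₁, X, l₂, rfl, hne, hst⟩ := ih h.2 (by simpa [hY] using hU)
      refine ⟨Y :: l₁, X, l₂, rfl, hne, fun v hv => ?_, hst⟩
      rw [spend_of_notMem (disjoint_left.1 hY hv)]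
      exact h.1 v hv
    · rw [not_disjoint_iff_nonempty_inter] at hY
      refine ⟨[], Y, l, rfl, hY, fun v hv => ?_, h.2.spend_of_lt ?_⟩
      · rw [mem_sdiff] at hv
        rw [spend_of_notMem hv.2]
        exact h.1 v hv.1
      · have := card_sdiff_add_card_inter Y U
        have := hY.card_pos
        omega

end IsStaircase

namespace IsMultipartition

variable {G : SimpleGraph α} {T X I : Finset α} {M : Multiset (Finset α)}

theorem card_sdiff_add_card (h : IsMultipartition G T M) (hX : X ∈ M) (hI : I ⊆ X) :
    #(T \ I) + #I = #T :=
  card_sdiff_add_card_eq_card (hI.trans (h.subset hX))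

theorem shrink (h : IsMultipartition G T (X ::ₘ M)) (hI : I ⊆ X) :
    IsMultipartition G (T \ I) ((X \ I) ::ₘ M) where
  bind_val := by
    rw [sdiff_val, ← h.bind_val, Multiset.cons_bind, Multiset.cons_bind, sdiff_val,
      tsub_add_eq_add_tsub (val_le_iff.2 hI)]
  adj_iff := by
    obtain ⟨hX, hM⟩ := Multiset.forall_mem_cons.1 h.adj_iff
    refine Multiset.forall_mem_cons.2 ⟨fun u hu v hv => ?_, fun Y hY u hu v hv => ?_⟩
    · rw [mem_sdiff] at hu hv
      rw [hX u hu.1 v hv.1, mem_sdiff, not_and_not_right]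
      exact ⟨fun hvX hvX' => absurd hvX' hvX, fun hvX hvX' => hv.2 (hvX hvX')⟩
    · exact hM Y hY u hu v (mem_sdiff.1 hv).1

theorem remove (h : IsMultipartition G T (X ::ₘ M)) : IsMultipartition G (T \ X) M where
  bind_val := by simpa using (h.shrink Subset.rfl).bind_val
  adj_iff Y hY := (h.shrink Subset.rfl).adj_iff Y (Multiset.mem_cons_of_mem hY)

end IsMultipartition

namespace IsBalanced

variable {k k' N N' m m' : ℕ} {B C : Multiset (Finset α)} {X : Finset α}

theorem after_spend {d e : ℕ} (h : IsBalanced k N m f B C)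
    (hle : ∀ X ∈ B + C, ∀ v ∈ X, k' ≤ spend U f v)
    (hadd : ∀ X ∈ C, ∀ u ∈ X, ∀ v ∈ X, u ≠ v → N' ≤ spend U f u + spend U f v + 1)
    (hB : ∀ X ∈ B, #(X ∩ U) ≤ d) (hd : N' + d ≤ N)
    (hC : ∀ X ∈ C, #(X ∩ U) ≤ e) (he : N' + m' + e ≤ N + m) :
    IsBalanced k' N' m' (spend U f) B C where
  card_pair := h.card_pair
  card_triple := h.card_triple
  le := hle
  le_sum_pair X hX := by
    have := h.le_sum_pair X hX
    have := sum_le_sum_spend_add_card_inter U f X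
    have := hB X hX
    omega
  le_add := hadd
  le_sum_triple X hX := by
    have := h.le_sum_triple X hX
    have := sum_le_sum_spend_add_card_inter U f X
    have := hC X hX
    omega

theorem le_spend (h : IsBalanced k N m f B C) (hk : k' < k) :
    ∀ X ∈ B + C, ∀ v ∈ X, k' ≤ spend U f v := fun X hX v hv => by
  have := h.le X hX v hv
  have := le_spend_add_one U f v
  omega

theorem le_spend_add (h : IsBalanced k N m f B C) (hN : N' + 2 ≤ N) :
    ∀ X ∈ C, ∀ u ∈ X, ∀ v ∈ X, u ≠ v →
      N' ≤ spend U f u + spend U f v + 1 := fun X hX u hu v hv huv => by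
  have := h.le_add X hX u hu v hv huv
  have := le_spend_add_one U f u
  have := le_spend_add_one U f v
  omega

theorem card_inter_pair_le (h : IsBalanced k N m f B C) (hX : X ∈ B) : #(X ∩ U) ≤ 2 :=
  (card_le_card inter_subset_left).trans_eq (h.card_pair X hX)

theorem card_inter_triple_le (h : IsBalanced k N m f B C) (hX : X ∈ C) : #(X ∩ U) ≤ 3 :=
  (card_le_card inter_subset_left).trans_eq (h.card_triple X hX)

end IsBalanced

/-- Presenting `U` can be answered by colouring a nonempty independent set `I ⊆ U` so that the
hypotheses of the technical lemma hold again. -/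
def HasReply (G : SimpleGraph α) (T U : Finset α) (f : α → ℕ) : Prop :=
  ∃ I ⊆ U, I.Nonempty ∧ (∀ u ∈ I, ∀ v ∈ I, ¬ G.Adj u v) ∧
    ∃ A B C S, IsFeasible G (T \ I) (spend U f) A B C S

theorem IsMultipartition.hasReply {G : SimpleGraph α} {T X I : Finset α}
    {M : Multiset (Finset α)} {A : List (Finset α)} {B C : Multiset (Finset α)}
    {S : List (Finset α)} (hM : IsMultipartition G T (X ::ₘ M)) (hI : I ⊆ X) (hIU : I ⊆ U)
    (hne : I.Nonempty) (hparts : (A + B + C + S : Multiset (Finset α)) = (X \ I) ::ₘ M)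
    (singles : IsStaircase (spend U f) (C.card + B.card) A)
    (balanced : IsBalanced (C.card + B.card) #(T \ I) (C.card + B.card + (A.map card).sum)
      (spend U f) B C)
    (reserve : IsStaircase (spend U f) (2 * C.card + B.card + (A.map card).sum) S) :
    HasReply G T U f :=
  ⟨I, hIU, hne, hM.not_adj (Multiset.mem_cons_self X M) hI, A, B, C, S,
    hparts ▸ hM.shrink hI, singles, balanced, reserve⟩

namespace IsFeasible

variable {G : SimpleGraph α} {T X : Finset α} {A : List (Finset α)} {B C : Multiset (Finset α)}
  {S : List (Finset α)}

theorem hasReply_of_triple_subset (h : IsFeasible G T f A B C S) (hX : X ∈ C) (hXU : X ⊆ U) :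
    HasReply G T U f := by
  obtain ⟨C, rfl⟩ := Multiset.exists_cons_of_mem hX
  have hC := Multiset.card_cons X C
  have hcard := h.balanced.card_triple X hX
  have hT := h.parts_triple.card_sdiff_add_card (Multiset.mem_cons_self X _) Subset.rfl
  refine ⟨X, hXU, card_pos.1 (by omega), h.parts_triple.not_adj (Multiset.mem_cons_self X _)
    Subset.rfl, A, B, C, S, h.parts_triple.remove, h.singles.spend_of_lt (by omega), ?_,
    h.reserve.spend_of_lt (by omega)⟩
  exact (h.balanced.after_spend (h.balanced.le_spend (by omega))
    (h.balanced.le_spend_add (by omega)) (fun _ => h.balanced.card_inter_pair_le) (by omega)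
    (fun _ => h.balanced.card_inter_triple_le) (by omega)).mono
      (Multiset.Subset.refl B) (Multiset.subset_cons C X)

theorem hasReply_of_pair_subset (h : IsFeasible G T f A B C S) (hX : X ∈ B) (hXU : X ⊆ U)
    (hCU : ∀ Y ∈ C, #(Y ∩ U) ≤ 2) : HasReply G T U f := by
  obtain ⟨B, rfl⟩ := Multiset.exists_cons_of_mem hX
  have hB := Multiset.card_cons X B
  have hcard := h.balanced.card_pair X hX
  have hT := h.parts_pair.card_sdiff_add_card (Multiset.mem_cons_self X _) Subset.rfl
  refine ⟨X, hXU, card_pos.1 (by omega), h.parts_pair.not_adj (Multiset.mem_cons_self X _)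
    Subset.rfl, A, B, C, S, h.parts_pair.remove, h.singles.spend_of_lt (by omega), ?_,
    h.reserve.spend_of_lt (by omega)⟩
  exact (h.balanced.after_spend (h.balanced.le_spend (by omega))
    (h.balanced.le_spend_add (by omega)) (fun _ => h.balanced.card_inter_pair_le) (by omega)
    hCU (by omega)).mono
      (Multiset.subset_cons B X) (Multiset.Subset.refl C)

theorem inter_eq_pair_of_tight (h : IsFeasible G T f A B C S) (hX : X ∈ C) {u v : α}
    (hu : u ∈ X) (hv : v ∈ X) (huv : u ≠ v) (htight : spend U f u + spend U f v + 2 < #T)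
    (hXU : #(X ∩ U) ≤ 2) : X ∩ U = {u, v} := by
  have hle := h.balanced.le_add X hX u hu v hv huv
  have hfu := le_spend_add_one U f u
  have hfv := le_spend_add_one U f v
  have huU : u ∈ U := mem_of_spend_lt (f := f) (by omega)
  have hvU : v ∈ U := mem_of_spend_lt (f := f) (by omega)
  symm
  refine eq_of_subset_of_card_le ?_ (by rwa [card_pair huv])
  simp only [insert_subset_iff, singleton_subset_iff, mem_inter]
  exact ⟨⟨hu, huU⟩, hv, hvU⟩

theorem hasReply_of_tight_edge (h : IsFeasible G T f A B C S) (hX : X ∈ C) {u v : α}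
    (hu : u ∈ X) (hv : v ∈ X) (huv : u ≠ v) (htight : spend U f u + spend U f v + 2 < #T)
    (hBU : ∀ Y ∈ B, #(Y ∩ U) ≤ 1) (hCU : ∀ Y ∈ C, #(Y ∩ U) ≤ 2) : HasReply G T U f := by
  have hinter := h.inter_eq_pair_of_tight hX hu hv huv htight (hCU X hX)
  have hcardU : #(X ∩ U) = 2 := hinter ▸ card_pair huv
  obtain ⟨w, hw⟩ : ∃ w, X \ U = {w} := by
    have := card_sdiff_add_card_inter X U
    have := h.balanced.card_triple X hX
    exact card_eq_one.1 (by omega)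
  have hsum := h.balanced.le_sum_triple X hX
  rw [← sum_sdiff (inter_subset_left : X ∩ U ⊆ X), sdiff_inter_self_left, hinter, sum_pair huv,
    hw, sum_singleton] at hsum
  have hfu := le_spend_add_one U f u
  have hfv := le_spend_add_one U f v
  obtain ⟨C, rfl⟩ := Multiset.exists_cons_of_mem hX
  have hC := Multiset.card_cons X C
  have hT := h.parts_triple.card_sdiff_add_card (Multiset.mem_cons_self X _)
    (inter_subset_left (s₂ := U))
  have hA : ((A ++ [X \ U]).map card).sum = (A.map card).sum + 1 := by simp [hw]
  refine h.parts_triple.hasReply (A := A ++ [X \ U]) (B := B) (C := C) (S := S)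
    inter_subset_left inter_subset_right (card_pos.1 (by omega)) ?_
    ((h.singles.spend_of_lt (by omega)).concat ?_) ?_ (h.reserve.spend_of_lt (by omega))
  · rw [sdiff_inter_self_left, coe_append_cons, List.append_nil]
    simp only [Multiset.cons_add]
  · intro x hx
    rw [spend_of_notMem (mem_sdiff.1 hx).2]
    rw [hw, mem_singleton] at hx
    subst hx
    omega
  · exact (h.balanced.after_spend (h.balanced.le_spend (by omega))
      (h.balanced.le_spend_add (by omega)) hBU (by omega) hCU (by omega)).mono
      (Multiset.Subset.refl B) (Multiset.subset_cons C X)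

theorem hasReply_of_tight_vertex_pair (h : IsFeasible G T f A B C S) (hX : X ∈ B) {v : α}
    (hv : v ∈ X) (htight : spend U f v < C.card + B.card)
    (hBU : ∀ Y ∈ B, #(Y ∩ U) ≤ 1) (hCU : ∀ Y ∈ C, #(Y ∩ U) ≤ 2)
    (hadd : ∀ Y ∈ C, ∀ x ∈ Y, ∀ y ∈ Y, x ≠ y → #T ≤ spend U f x + spend U f y + 2) :
    HasReply G T U f := by
  have hvU : v ∈ U :=
    mem_of_spend_lt (htight.trans_le (h.balanced.le X (Multiset.mem_add.2 (.inl hX)) v hv))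
  have hfv := le_spend_add_one U f v
  have hinter : X ∩ U = {v} := by
    symm
    exact eq_of_subset_of_card_le (by simp [hv, hvU]) (hBU X hX)
  obtain ⟨w, hw⟩ : ∃ w, X \ U = {w} := by
    have := card_sdiff_add_card_inter X U
    rw [hinter, card_singleton, h.balanced.card_pair X hX] at this
    exact card_eq_one.1 (by omega)
  have hsum := h.balanced.le_sum_pair X hX
  rw [← sum_sdiff (inter_subset_left : X ∩ U ⊆ X), sdiff_inter_self_left, hinter, hw,
    sum_singleton, sum_singleton] at hsum
  have hN := h.card_eq
  obtain ⟨B, rfl⟩ := Multiset.exists_cons_of_mem hX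
  have hB := Multiset.card_cons X B
  have hT := h.parts_pair.card_sdiff_add_card (Multiset.mem_cons_self X _)
    (inter_subset_left (s₂ := U))
  have hcardU : #(X ∩ U) = 1 := by rw [hinter, card_singleton]
  refine h.parts_pair.hasReply (A := A) (B := B) (C := C) (S := S ++ [X \ U])
    inter_subset_left inter_subset_right (card_pos.1 (by omega)) ?_
    (h.singles.spend_of_lt (by omega)) ?_ ((h.reserve.spend_of_lt (by omega)).concat ?_)
  · rw [sdiff_inter_self_left, coe_append_cons, List.append_nil]
    simp only [Multiset.add_cons]
  · refine (h.balanced.after_spend (h.balanced.le_spend (by omega)) ?_ hBU (by omega) hCU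
      (by omega)).mono (Multiset.subset_cons B X) (Multiset.Subset.refl C)
    intro Y hY x hx y hy hxy
    have := hadd Y hY x hx y hy hxy
    omega
  · intro x hx
    rw [spend_of_notMem (mem_sdiff.1 hx).2]
    rw [hw, mem_singleton] at hx
    subst hx
    omega

theorem hasReply_of_tight_vertex_triple (h : IsFeasible G T f A B C S) (hX : X ∈ C) {v : α}
    (hv : v ∈ X) (htight : spend U f v < C.card + B.card)
    (hBU : ∀ Y ∈ B, #(Y ∩ U) ≤ 1) (hCU : ∀ Y ∈ C, #(Y ∩ U) ≤ 2)
    (hadd : ∀ Y ∈ C, ∀ x ∈ Y, ∀ y ∈ Y, x ≠ y → #T ≤ spend U f x + spend U f y + 2) :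
    HasReply G T U f := by
  have hvU : v ∈ U :=
    mem_of_spend_lt (htight.trans_le (h.balanced.le X (Multiset.mem_add.2 (.inr hX)) v hv))
  have haddX := hadd X hX v hv
  have hN := h.card_eq
  obtain ⟨C, rfl⟩ := Multiset.exists_cons_of_mem hX
  have hC := Multiset.card_cons X C
  have hvX : {v} ⊆ X := singleton_subset_iff.2 hv
  have hT := h.parts_triple.card_sdiff_add_card (Multiset.mem_cons_self X _) hvX
  rw [card_singleton] at hT
  refine h.parts_triple.hasReply (A := A) (B := B) (C := C) (S := S ++ [X \ {v}])
    hvX (singleton_subset_iff.2 hvU) (singleton_nonempty v) ?_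
    (h.singles.spend_of_lt (by omega)) ?_ ((h.reserve.spend_of_lt (by omega)).concat ?_)
  · rw [coe_append_cons, List.append_nil]
    simp only [Multiset.add_cons]
  · refine (h.balanced.after_spend (h.balanced.le_spend (by omega)) ?_ hBU (by omega) hCU
      (by omega)).mono (Multiset.Subset.refl B) (Multiset.subset_cons C X)
    intro Y hY x hx y hy hxy
    have := hadd Y hY x hx y hy hxy
    omega
  · intro x hx
    rw [mem_sdiff, mem_singleton] at hx
    have := haddX x hx.1 (Ne.symm hx.2)
    omega

end IsFeasible

/-- No part of size two or three calls for an immediate answer to the presentation of `U`: none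
is covered by `U`, and paying for `U` keeps the lower bounds `k` on single budgets and, after
one vertex is coloured, `N - 1` on sums of two budgets in a part of size three. -/
structure IsCalm (U : Finset α) (k N : ℕ) (f : α → ℕ) (B C : Multiset (Finset α)) : Prop where
  card_inter_pair_le : ∀ X ∈ B, #(X ∩ U) ≤ 1
  card_inter_triple_le : ∀ X ∈ C, #(X ∩ U) ≤ 2
  le_spend : ∀ X ∈ B + C, ∀ v ∈ X, k ≤ spend U f v
  le_spend_add : ∀ X ∈ C, ∀ u ∈ X, ∀ v ∈ X, u ≠ v → N ≤ spend U f u + spend U f v + 2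

theorem IsCalm.le_spend_add_of_lt {k N N' : ℕ} {B C : Multiset (Finset α)}
    (h : IsCalm U k N f B C) (hN : N' < N) :
    ∀ X ∈ C, ∀ u ∈ X, ∀ v ∈ X, u ≠ v → N' ≤ spend U f u + spend U f v + 1 :=
  fun X hX u hu v hv huv => by
    have := h.le_spend_add X hX u hu v hv huv
    omega

namespace IsFeasible

variable {G : SimpleGraph α} {T X : Finset α} {A : List (Finset α)} {B C : Multiset (Finset α)}
  {S : List (Finset α)}

theorem hasReply_or_isCalm (h : IsFeasible G T f A B C S) :
    HasReply G T U f ∨ IsCalm U (C.card + B.card) #T f B C := by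
  by_contra! hcon
  obtain ⟨hno, hcalm⟩ := hcon
  have hCU : ∀ X ∈ C, #(X ∩ U) ≤ 2 := fun X hX =>
    Nat.le_of_lt_succ ((card_inter_lt_of_not_subset fun hXU =>
      hno (h.hasReply_of_triple_subset hX hXU)).trans_eq (h.balanced.card_triple X hX))
  have hBU : ∀ X ∈ B, #(X ∩ U) ≤ 1 := fun X hX =>
    Nat.le_of_lt_succ ((card_inter_lt_of_not_subset fun hXU =>
      hno (h.hasReply_of_pair_subset hX hXU hCU)).trans_eq (h.balanced.card_pair X hX))
  have hadd : ∀ X ∈ C, ∀ u ∈ X, ∀ v ∈ X, u ≠ v → #T ≤ spend U f u + spend U f v + 2 := by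
    intro X hX u hu v hv huv
    by_contra! htight
    exact hno (h.hasReply_of_tight_edge hX hu hv huv htight hBU hCU)
  refine hcalm ⟨hBU, hCU, fun X hX v hv => ?_, hadd⟩
  by_contra! htight
  rcases Multiset.mem_add.1 hX with hX | hX
  · exact hno (h.hasReply_of_tight_vertex_pair hX hv htight hBU hCU hadd)
  · exact hno (h.hasReply_of_tight_vertex_triple hX hv htight hBU hCU hadd)

theorem hasReply_of_singles (h : IsFeasible G T f A B C S)
    (hU : IsCalm U (C.card + B.card) #T f B C) (hA : ∃ X ∈ A, ¬ Disjoint X U) :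
    HasReply G T U f := by
  obtain ⟨l₁, X, l₂, rfl, hne, hst⟩ := h.singles.exists_shrink hA
  have hparts : IsMultipartition G T (X ::ₘ ((l₁ ++ l₂ : List (Finset α)) + B + C + S)) := by
    simpa only [coe_append_cons, Multiset.cons_add] using h.parts
  have hT := hparts.card_sdiff_add_card (Multiset.mem_cons_self X _) (inter_subset_left (s₂ := U))
  have hpos := hne.card_pos
  have hsum : ((l₁ ++ (X \ U) :: l₂).map card).sum + #(X ∩ U)
      = ((l₁ ++ X :: l₂).map card).sum := by
    simp only [List.map_append, List.sum_append, List.map_cons, List.sum_cons,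
      ← card_sdiff_add_card_inter X U]
    omega
  refine hparts.hasReply inter_subset_left inter_subset_right hne ?_ hst ?_
    (h.reserve.spend_of_lt (by omega))
  · simp only [sdiff_inter_self_left, coe_append_cons, Multiset.cons_add]
  · exact h.balanced.after_spend hU.le_spend (hU.le_spend_add_of_lt (by omega))
      hU.card_inter_pair_le (by omega) hU.card_inter_triple_le (by omega)

theorem hasReply_of_two_mem_triple (h : IsFeasible G T f A B C S)
    (hU : IsCalm U (C.card + B.card) #T f B C) (hA : ∀ Y ∈ A, Disjoint Y U) (hX : X ∈ C)
    (hXU : #(X ∩ U) = 2) : HasReply G T U f := by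
  have hrest : #(X \ U) = 1 := by
    have := card_sdiff_add_card_inter X U
    have := h.balanced.card_triple X hX
    omega
  obtain ⟨C, rfl⟩ := Multiset.exists_cons_of_mem hX
  have hC := Multiset.card_cons X C
  have hT := h.parts_triple.card_sdiff_add_card (Multiset.mem_cons_self X _)
    (inter_subset_left (s₂ := U))
  have hsum : (((X \ U) :: A).map card).sum = (A.map card).sum + 1 := by simp [hrest, add_comm]
  refine h.parts_triple.hasReply (A := (X \ U) :: A) (B := B) (C := C) (S := S)
    inter_subset_left inter_subset_right (card_pos.1 (by omega)) ?_
    ⟨fun w hw => ?_, h.singles.spend_of_disjoint (by omega) hA⟩ ?_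
    (h.reserve.spend_of_lt (by omega))
  · simp only [sdiff_inter_self_left, ← Multiset.cons_coe, Multiset.cons_add]
  · rw [mem_sdiff] at hw
    rw [spend_of_notMem hw.2]
    have := h.balanced.le X (Multiset.mem_add.2 (.inr hX)) w hw.1
    omega
  · exact (h.balanced.after_spend (h.balanced.le_spend (by omega))
      (h.balanced.le_spend_add (by omega)) hU.card_inter_pair_le (by omega)
      hU.card_inter_triple_le (by omega)).mono
      (Multiset.Subset.refl B) (Multiset.subset_cons C X)

theorem hasReply_of_one_mem_triple (h : IsFeasible G T f A B C S)
    (hU : IsCalm U (C.card + B.card) #T f B C) (hA : ∀ Y ∈ A, Disjoint Y U)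
    (hCU : ∀ Y ∈ C, #(Y ∩ U) ≤ 1) (hX : X ∈ C) (hXU : #(X ∩ U) = 1) : HasReply G T U f := by
  have hrest : #(X \ U) = 2 := by
    have := card_sdiff_add_card_inter X U
    have := h.balanced.card_triple X hX
    omega
  have hle : ∀ w ∈ X \ U, C.card + B.card ≤ spend U f w := fun w hw =>
    hU.le_spend X (Multiset.mem_add.2 (.inr hX)) w (mem_sdiff.1 hw).1
  have hpair : #T ≤ ∑ w ∈ X \ U, spend U f w + 1 := by
    obtain ⟨a, b, hab, hXab⟩ := card_eq_two.1 hrest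
    obtain ⟨⟨ha, haU⟩, hb, hbU⟩ : (a ∈ X ∧ a ∉ U) ∧ b ∈ X ∧ b ∉ U := by
      simp [← mem_sdiff, hXab]
    rw [hXab, sum_pair hab, spend_of_notMem haU, spend_of_notMem hbU]
    exact h.balanced.le_add X hX a ha b hb hab
  obtain ⟨C, rfl⟩ := Multiset.exists_cons_of_mem hX
  have hC := Multiset.card_cons X C
  have hB := Multiset.card_cons (X \ U) B
  have hT := h.parts_triple.card_sdiff_add_card (Multiset.mem_cons_self X _)
    (inter_subset_left (s₂ := U))
  have hk : C.card + ((X \ U) ::ₘ B).card = (X ::ₘ C).card + B.card := by omega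
  refine h.parts_triple.hasReply (A := A) (B := (X \ U) ::ₘ B) (C := C) (S := S)
    inter_subset_left inter_subset_right (card_pos.1 (by omega)) ?_
    (h.singles.spend_of_disjoint hk.le hA) ?_ (h.reserve.spend_of_lt (by omega))
  · simp only [sdiff_inter_self_left, Multiset.add_cons, Multiset.cons_add]
  · rw [hk]
    exact ((h.balanced.after_spend hU.le_spend (hU.le_spend_add_of_lt (by omega))
      hU.card_inter_pair_le (by omega) hCU (by omega)).mono
      (Multiset.Subset.refl B) (Multiset.subset_cons C X)).cons_pair hrest hle (by omega)

theorem hasReply_of_reserve (h : IsFeasible G T f A B C S)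
    (hU : IsCalm U (C.card + B.card) #T f B C) (hA : ∀ Y ∈ A, Disjoint Y U)
    (hC : ∀ Y ∈ C, #(Y ∩ U) ≤ 0) (hS : ∃ X ∈ S, ¬ Disjoint X U) : HasReply G T U f := by
  obtain ⟨l₁, X, l₂, rfl, hne, hst⟩ := h.reserve.exists_shrink hS
  have hparts : IsMultipartition G T (X ::ₘ (A + B + C + (l₁ ++ l₂ : List (Finset α)))) := by
    simpa only [coe_append_cons, Multiset.add_cons] using h.parts
  have hT := hparts.card_sdiff_add_card (Multiset.mem_cons_self X _) (inter_subset_left (s₂ := U))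
  have hpos := hne.card_pos
  refine hparts.hasReply inter_subset_left inter_subset_right hne ?_
    (h.singles.spend_of_disjoint le_rfl hA) ?_ hst
  · simp only [sdiff_inter_self_left, coe_append_cons, Multiset.add_cons]
  · exact h.balanced.after_spend hU.le_spend (hU.le_spend_add_of_lt (by omega))
      hU.card_inter_pair_le (by omega) hC (by omega)

theorem hasReply_of_one_mem_pair (h : IsFeasible G T f A B C S)
    (hU : IsCalm U (C.card + B.card) #T f B C) (hA : ∀ Y ∈ A, Disjoint Y U)
    (hC : ∀ Y ∈ C, #(Y ∩ U) ≤ 0) (hS : ∀ Y ∈ S, Disjoint Y U) (hX : X ∈ B)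
    (hXU : #(X ∩ U) = 1) : HasReply G T U f := by
  have hrest : #(X \ U) = 1 := by
    have := card_sdiff_add_card_inter X U
    have := h.balanced.card_pair X hX
    omega
  obtain ⟨B, rfl⟩ := Multiset.exists_cons_of_mem hX
  have hB := Multiset.card_cons X B
  have hT := h.parts_pair.card_sdiff_add_card (Multiset.mem_cons_self X _)
    (inter_subset_left (s₂ := U))
  have hsum : (((X \ U) :: A).map card).sum = (A.map card).sum + 1 := by simp [hrest, add_comm]
  refine h.parts_pair.hasReply (A := (X \ U) :: A) (B := B) (C := C) (S := S)
    inter_subset_left inter_subset_right (card_pos.1 (by omega)) ?_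
    ⟨fun w hw => ?_, h.singles.spend_of_disjoint (by omega) hA⟩ ?_
    (h.reserve.spend_of_disjoint (by omega) hS)
  · simp only [sdiff_inter_self_left, ← Multiset.cons_coe, Multiset.cons_add]
  · rw [mem_sdiff] at hw
    rw [spend_of_notMem hw.2]
    have := h.balanced.le X (Multiset.mem_add.2 (.inl hX)) w hw.1
    omega
  · exact (h.balanced.after_spend (h.balanced.le_spend (by omega))
      (hU.le_spend_add_of_lt (by omega)) hU.card_inter_pair_le (by omega) hC (by omega)).mono
      (Multiset.subset_cons B X) (Multiset.Subset.refl C)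

theorem hasReply (h : IsFeasible G T f A B C S) (hUT : U ⊆ T) (hne : U.Nonempty) :
    HasReply G T U f := by
  by_contra hno
  have hU := h.hasReply_or_isCalm.resolve_left hno
  have hA : ∀ X ∈ A, Disjoint X U := by
    by_contra! hA
    exact hno (h.hasReply_of_singles hU hA)
  have hC₁ : ∀ X ∈ C, #(X ∩ U) ≤ 1 := fun X hX => by
    by_contra! hXU
    exact hno (h.hasReply_of_two_mem_triple hU hA hX
      (le_antisymm (hU.card_inter_triple_le X hX) hXU))
  have hC₀ : ∀ X ∈ C, #(X ∩ U) ≤ 0 := fun X hX => by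
    by_contra! hXU
    exact hno (h.hasReply_of_one_mem_triple hU hA hC₁ hX (le_antisymm (hC₁ X hX) hXU))
  have hS : ∀ X ∈ S, Disjoint X U := by
    by_contra! hS
    exact hno (h.hasReply_of_reserve hU hA hC₀ hS)
  have hB₀ : ∀ X ∈ B, #(X ∩ U) ≤ 0 := fun X hX => by
    by_contra! hXU
    exact hno (h.hasReply_of_one_mem_pair hU hA hC₀ hS hX
      (le_antisymm (hU.card_inter_pair_le X hX) hXU))
  obtain ⟨v, hv⟩ := hne
  obtain ⟨X, hX, hvX⟩ := h.parts.mem_iff.1 (hUT hv)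
  have hXU : ¬ #(X ∩ U) ≤ 0 := not_le.2 (card_pos.2 ⟨v, mem_inter.2 ⟨hvX, hv⟩⟩)
  simp only [Multiset.mem_add, Multiset.mem_coe] at hX
  rcases hX with ((hX | hX) | hX) | hX
  · exact disjoint_left.1 (hA X hX) hvX hv
  · exact hXU (hB₀ X hX)
  · exact hXU (hC₀ X hX)
  · exact disjoint_left.1 (hS X hX) hvX hv

end IsFeasible

end Round

theorem onlineChoosable_of_invariant {α : Type} [DecidableEq α] {G : SimpleGraph α}
    {Good : Finset α → (α → ℕ) → Prop} (pos : ∀ T f, Good T f → ∀ v ∈ T, 1 ≤ f v)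
    (reply : ∀ T f, Good T f → ∀ U ⊆ T, U.Nonempty →
      ∃ I ⊆ U, I.Nonempty ∧ (∀ u ∈ I, ∀ v ∈ I, ¬ G.Adj u v) ∧ Good (T \ I) (spend U f))
    {T : Finset α} {f : α → ℕ} (h : Good T f) : OnlineChoosable G T f := by
  suffices ∀ n T f, #T < n → Good T f → OnlineChoosableAux G n T f from
    ⟨#T + 1, this _ T f (Nat.lt_succ_self _) h⟩
  intro n
  induction n with
  | zero => exact fun T f hT => absurd hT (Nat.not_lt_zero _)
  | succ n ih =>
    intro T f hT hgood
    by_cases hedge : ∃ u ∈ T, ∃ v ∈ T, G.Adj u v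
    · refine Or.inr ⟨hedge, fun U hUT hU => ?_⟩
      obtain ⟨I, hIU, hne, hind, hgood'⟩ := reply T f hgood U hUT hU
      have hlt : #(T \ I) < #T := card_lt_card (sdiff_ssubset (hIU.trans hUT) hne)
      exact ⟨I, hIU, hind, ih _ _ (by omega) hgood'⟩
    · push Not at hedge
      exact Or.inl ⟨hedge, pos T f hgood⟩

theorem IsFeasible.onlineChoosable {α : Type} [DecidableEq α] {G : SimpleGraph α} {T : Finset α}
    {f : α → ℕ} {A : List (Finset α)} {B C : Multiset (Finset α)} {S : List (Finset α)}
    (h : IsFeasible G T f A B C S) : OnlineChoosable G T f :=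
  onlineChoosable_of_invariant (Good := fun T f => ∃ A B C S, IsFeasible G T f A B C S)
    (fun _ _ ⟨_, _, _, _, h⟩ => h.pos) (fun _ _ ⟨_, _, _, _, h⟩ _ hUT hU => h.hasReply hUT hU)
    ⟨A, B, C, S, h⟩

theorem val_univ_sum_sum (ι κ μ : Type*) [Fintype ι] [Fintype κ] [Fintype μ] :
    (univ : Finset (ι ⊕ κ ⊕ μ)).val = univ.val.map Sum.inl +
      univ.val.map (Sum.inr ∘ Sum.inl) + univ.val.map (Sum.inr ∘ Sum.inr) := by
  rw [← univ_disjSum_univ, val_disjSum, ← univ_disjSum_univ, val_disjSum, Multiset.disjSum,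
    Multiset.disjSum, Multiset.map_add, Multiset.map_map, Multiset.map_map, add_assoc]

theorem onlineChoosable_of_technical_conditions {V : Type} [Fintype V] [DecidableEq V]
    {k₁ k₂ k₃ : ℕ} {P : V → Fin k₁ ⊕ Fin k₂ ⊕ Fin k₃} {G : SimpleGraph V} {f : V → ℕ}
    (hAdj : ∀ u v, G.Adj u v ↔ P u ≠ P v)
    (hA : ∀ i : Fin k₁, #{v | P v = Sum.inl i} = 1)
    (hB : ∀ i : Fin k₂, #{v | P v = Sum.inr (Sum.inl i)} = 2)
    (hC : ∀ i : Fin k₃, #{v | P v = Sum.inr (Sum.inr i)} = 3)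
    (single : ∀ i : Fin k₁, ∀ v, P v = Sum.inl i → k₃ + k₂ + ((i : ℕ) + 1) ≤ f v)
    (pair : ∀ i : Fin k₂, ∀ v, P v = Sum.inr (Sum.inl i) → k₃ + k₂ ≤ f v)
    (sum_pair : ∀ i : Fin k₂, Fintype.card V ≤ ∑ v with P v = Sum.inr (Sum.inl i), f v)
    (triple : ∀ i : Fin k₃, ∀ v, P v = Sum.inr (Sum.inr i) → k₃ + k₂ ≤ f v)
    (add_triple : ∀ i : Fin k₃, ∀ u v, P u = Sum.inr (Sum.inr i) → P v = Sum.inr (Sum.inr i) →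
      u ≠ v → Fintype.card V - 1 ≤ f u + f v)
    (sum_triple : ∀ i : Fin k₃,
      Fintype.card V - 1 + k₃ + k₂ + k₁ ≤ ∑ v with P v = Sum.inr (Sum.inr i), f v) :
    OnlineChoosable G univ f := by
  let part (i : Fin k₁ ⊕ Fin k₂ ⊕ Fin k₃) : Finset V := {v | P v = i}
  let A : List (Finset V) := (List.finRange k₁).map fun i => part (.inl i)
  let B : Multiset (Finset V) := univ.val.map fun i : Fin k₂ => part (.inr (.inl i))
  let C : Multiset (Finset V) := univ.val.map fun i : Fin k₃ => part (.inr (.inr i))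
  have hcardB : B.card = k₂ := by simp [B]
  have hcardC : C.card = k₃ := by simp [C]
  have hsumA : (A.map card).sum = k₁ := by simp [A, part, Function.comp_def, hA]
  have hpart : ∀ {i v}, v ∈ part i ↔ P v = i := mem_filter_univ _
  have forall_B {p : Finset V → Prop} (hp : ∀ i, p (part (.inr (.inl i)))) : ∀ X ∈ B, p X := by
    simpa [B] using hp
  have forall_C {p : Finset V → Prop} (hp : ∀ i, p (part (.inr (.inr i)))) : ∀ X ∈ C, p X := by
    simpa [C] using hp
  refine IsFeasible.onlineChoosable (A := A) (B := B) (C := C) (S := []) ⟨?_, ?_, ?_, trivial⟩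
  · have hparts : (A + B + C + ([] : List (Finset V)) : Multiset (Finset V)) =
        univ.val.map part := by
      simp only [val_univ_sum_sum, Multiset.map_add, Multiset.map_map, Multiset.coe_nil, add_zero]
      rfl
    exact hparts ▸ IsMultipartition.of_fibers hAdj
  · rw [hcardB, hcardC]
    refine IsStaircase.of_card_eq_one (by simpa [A] using hA) fun i hi v hv => ?_
    simp only [A, List.getElem_map, List.getElem_finRange, hpart] at hv
    exact single _ v hv
  · rw [hcardB, hcardC, hsumA, card_univ]
    exact
    { card_pair := forall_B hB
      card_triple := forall_C hC
      le := fun X hX => (Multiset.mem_add.1 hX).elim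
        (forall_B (p := fun X => ∀ v ∈ X, k₃ + k₂ ≤ f v) (fun i v hv => pair i v (hpart.1 hv)) X)
        (forall_C (p := fun X => ∀ v ∈ X, k₃ + k₂ ≤ f v) (fun i v hv => triple i v (hpart.1 hv)) X)
      le_sum_pair := forall_B sum_pair
      le_add := forall_C fun i u hu v hv huv =>
        Nat.sub_le_iff_le_add.1 (add_triple i u v (hpart.1 hu) (hpart.1 hv) huv)
      le_sum_triple := forall_C fun i => by
        have : _ ≤ ∑ v ∈ part (.inr (.inr i)), f v := sum_triple i
        omega }

end Development

open Finset in
/-- For a complete multipartite graph `G` with `k₁` parts of size 1, `k₂` parts of size 2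
and `k₃` parts of size 3 (parts are the fibres of `P`), if `|V(G)| ≤ 2χ(G)` where
`χ(G) = k₁ + k₂ + k₃`, then the constant function `f ≡ χ(G)` satisfies all hypotheses of
the technical lemma with `𝒮 = ∅` (for any ordering of the parts of size 1), and
consequently `G` is on-line `χ(G)`-choosable. -/
theorem const_chromatic_satisfies_technical_conditions
    (k₁ k₂ k₃ : ℕ)
    (P : V → Fin k₁ ⊕ Fin k₂ ⊕ Fin k₃)
    (G : SimpleGraph V)
    (hAdj : ∀ u v, G.Adj u v ↔ P u ≠ P v)
    (hA : ∀ i : Fin k₁, (univ.filter fun v => P v = Sum.inl i).card = 1)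
    (hB : ∀ i : Fin k₂, (univ.filter fun v => P v = Sum.inr (Sum.inl i)).card = 2)
    (hC : ∀ i : Fin k₃, (univ.filter fun v => P v = Sum.inr (Sum.inr i)).card = 3)
    (hcard : Fintype.card V ≤ 2 * (k₁ + k₂ + k₃))
    (f : V → ℕ) (hf : ∀ v, f v = k₁ + k₂ + k₃) :
    (∀ i : Fin k₁, ∀ v, P v = Sum.inl i → k₃ + k₂ + ((i : ℕ) + 1) ≤ f v) ∧
    (∀ i : Fin k₂, ∀ v, P v = Sum.inr (Sum.inl i) → k₃ + k₂ ≤ f v) ∧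
    (∀ i : Fin k₂,
      Fintype.card V ≤ ∑ v ∈ univ.filter (fun v => P v = Sum.inr (Sum.inl i)), f v) ∧
    (∀ i : Fin k₃, ∀ v, P v = Sum.inr (Sum.inr i) → k₃ + k₂ ≤ f v) ∧
    (∀ i : Fin k₃, ∀ u v, P u = Sum.inr (Sum.inr i) → P v = Sum.inr (Sum.inr i) →
      u ≠ v → Fintype.card V - 1 ≤ f u + f v) ∧
    (∀ i : Fin k₃,
      Fintype.card V - 1 + k₃ + k₂ + k₁ ≤
        ∑ v ∈ univ.filter (fun v => P v = Sum.inr (Sum.inr i)), f v) ∧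
    OnlineChoosable G Finset.univ f := by
  have single : ∀ i : Fin k₁, ∀ v, P v = Sum.inl i → k₃ + k₂ + ((i : ℕ) + 1) ≤ f v :=
    fun i v _ => by rw [hf]; omega
  have le : ∀ v, k₃ + k₂ ≤ f v := fun v => by rw [hf]; omega
  have sum_pair (i : Fin k₂) : Fintype.card V ≤ ∑ v with P v = Sum.inr (Sum.inl i), f v := by
    simp only [hf, sum_const, hB, smul_eq_mul]
    exact hcard
  have add_triple (u v : V) : Fintype.card V - 1 ≤ f u + f v := by
    rw [hf, hf]
    omega
  have sum_triple (i : Fin k₃) : Fintype.card V - 1 + k₃ + k₂ + k₁ ≤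
      ∑ v with P v = Sum.inr (Sum.inr i), f v := by
    simp only [hf, sum_const, hC, smul_eq_mul]
    omega
  exact ⟨single, fun _ v _ => le v, sum_pair, fun _ v _ => le v, fun _ u v _ _ _ => add_triple u v,
    sum_triple, onlineChoosable_of_technical_conditions hAdj hA hB hC single (fun _ v _ => le v)
      sum_pair (fun _ v _ => le v) (fun _ u v _ _ _ => add_triple u v) sum_triple⟩
end

section
/- If G is a finite simple graph in which every independent set has size at most 3 and |V(G)| ≤ 2χ(G), then G is on-line χ(G)-choosable (hence ch^OL(G) = χ(G)); moreover it suffices to prove this when G is a complete multipartite graph with all parts of size at most 3, since every graph with independence number at most 3 is a spanning subgraph of such a complete multipartite graph with the same chromatic number bound. -/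
variable {V : Type} [Fintype V] [DecidableEq V]

/-- The on-line choice number: least `k` such that `G` is on-line `k`-choosable. -/
noncomputable def onlineChoiceNumber (G : SimpleGraph V) : ℕ :=
  sInf {k | OnlineChoosable G Finset.univ (fun _ => k)}

/-- The chromatic number of `G` as a natural number. -/
noncomputable def chromNum (G : SimpleGraph V) : ℕ := sInf {n | G.Colorable n}

/-!
Give every vertex `f v` tokens and let a vertex spend one token each time it is presented.
Partition the graph into independent parts; a presented set `U` is always answered by colouring
`P ∩ U` for a single part `P`, after which `P \ U` is a smaller part. It is enough to keep the
tokens above demands that depend only on the sizes of the parts: the parts are ordered lists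
`front` and `back` whose demands climb with the number of vertices filed before them, and unordered
blocks of size two and three with lower bounds on the tokens of one, two and all vertices of a
block. The part to answer in is the first that applies of: a block presented as a whole, two
presented vertices of a triple that meet their common bound exactly, a presented vertex of a block
that meets its bound exactly, the first presented part of `front`, a triple with two presented
vertices, the first presented part of `back`, any presented block. In each case the loss of tokens
is offset by the drop of the demands. If `k` independent parts of size at most three have at most
`2 * k` vertices in total, then `k` tokens on every vertex meet the initial demands.
-/

namespace OnlineOhba

open Finset

section Staggered

variable {α : Type*} {f f' : α → ℕ} {t t' : ℕ} {L : List (Finset α)}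

/-- The total number of vertices in a list of parts, counted with multiplicity. -/
def weight (L : List (Finset α)) : ℕ := (L.map card).sum

@[simp]
theorem weight_nil : weight ([] : List (Finset α)) = 0 := rfl

@[simp]
theorem weight_cons (P : Finset α) (L : List (Finset α)) : weight (P :: L) = #P + weight L := by
  simp [weight]

@[simp]
theorem weight_append (L L' : List (Finset α)) : weight (L ++ L') = weight L + weight L' := by
  simp [weight]

/-- A list of parts is staggered from `t` if every vertex `v` has at least `t` tokens plus one for
each vertex in the earlier parts. -/
def Staggered (f : α → ℕ) : ℕ → List (Finset α) → Prop
  | _, [] => True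
  | t, P :: L => (∀ v ∈ P, t ≤ f v) ∧ Staggered f (t + #P) L

theorem staggered_append {L L' : List (Finset α)} :
    Staggered f t (L ++ L') ↔ Staggered f t L ∧ Staggered f (t + weight L) L' := by
  induction L generalizing t with
  | nil => simp [Staggered]
  | cons P L ih => simp [Staggered, ih, and_assoc, add_assoc]

theorem Staggered.le_apply (h : Staggered f t L) {P : Finset α} (hP : P ∈ L) {v : α}
    (hv : v ∈ P) : t ≤ f v := by
  obtain ⟨L₁, L₂, rfl⟩ := List.append_of_mem hP
  have := (staggered_append.1 h).2.1 v hv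
  omega

theorem Staggered.mono (h : Staggered f t L) (hf : ∀ P ∈ L, ∀ v ∈ P, t' + f v ≤ t + f' v) :
    Staggered f' t' L := by
  induction L generalizing t t' with
  | nil => trivial
  | cons P L ih =>
    rw [List.forall_mem_cons] at hf
    refine ⟨fun v hv => ?_, ih h.2 fun Q hQ v hv => ?_⟩
    · have := h.1 v hv
      have := hf.1 v hv
      omega
    · have := hf.2 Q hQ v hv
      omega

theorem staggered_const {k : ℕ} (h : t + weight L ≤ k + 1) : Staggered (fun _ => k) t L := by
  induction L generalizing t with
  | nil => trivial
  | cons P L ih =>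
    rw [weight_cons] at h
    refine ⟨fun v hv => ?_, ih (by omega)⟩
    change t ≤ k
    have := card_pos.2 ⟨v, hv⟩
    omega

end Staggered

section Bounds

variable {α : Type*} {f : α → ℕ}

/-- The token requirements on a part of size two: at least `m` tokens on each vertex and `n` in
total. -/
structure PairBound (f : α → ℕ) (m n : ℕ) (P : Finset α) : Prop where
  card_eq : #P = 2
  le_apply : ∀ v ∈ P, m ≤ f v
  le_sum : n ≤ ∑ v ∈ P, f v

/-- The token requirements on a part of size three: at least `m` tokens on each vertex, `n - 1` on
any two and `n + s - 1` in total, written without subtraction. -/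
structure TripleBound (f : α → ℕ) (m n s : ℕ) (T : Finset α) : Prop where
  card_eq : #T = 3
  le_apply : ∀ v ∈ T, m ≤ f v
  le_add : ∀ u ∈ T, ∀ v ∈ T, u ≠ v → n ≤ f u + f v + 1
  le_sum : n + s ≤ ∑ v ∈ T, f v + 1

theorem PairBound.le_add {m n : ℕ} {P : Finset α} (h : PairBound f m n P) {u v : α}
    (hu : u ∈ P) (hv : v ∈ P) (huv : u ≠ v) : n ≤ f u + f v := by
  classical
  have hP : {u, v} = P := eq_of_subset_of_card_le (by simp [insert_subset_iff, hu, hv])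
    (by rw [h.card_eq, card_pair huv])
  rw [← sum_pair huv, hP]
  exact h.le_sum

theorem TripleBound.le_add_add {m n s : ℕ} {T : Finset α} (h : TripleBound f m n s T) {u v w : α}
    (hu : u ∈ T) (hv : v ∈ T) (hw : w ∈ T) (huv : u ≠ v) (huw : u ≠ w) (hvw : v ≠ w) :
    n + s ≤ f u + f v + f w + 1 := by
  classical
  have hT : {u, v, w} = T := eq_of_subset_of_card_le (by simp [insert_subset_iff, hu, hv, hw])
    (by rw [h.card_eq, card_eq_three.2 ⟨u, v, w, huv, huw, hvw, rfl⟩])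
  have hsum : ∑ x ∈ T, f x = f u + f v + f w := by
    rw [← hT, sum_insert (by simp [huv, huw]), sum_pair hvw, add_assoc]
  rw [← hsum]
  exact h.le_sum

end Bounds

section Spend

variable {α : Type*} [DecidableEq α] {f : α → ℕ} {U P T : Finset α} {v : α}

/-- The token function after one round in which `U` was presented. A vertex without tokens keeps
none, since the subtraction is truncated. -/
def spend (f : α → ℕ) (U : Finset α) : α → ℕ := fun v => f v - if v ∈ U then 1 else 0

theorem le_spend_add_one (f : α → ℕ) (U : Finset α) (v : α) : f v ≤ spend f U v + 1 := by
  unfold spend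
  split_ifs <;> omega

theorem spend_of_notMem (hv : v ∉ U) : spend f U v = f v := by
  simp [spend, hv]

theorem le_spend {m m' : ℕ} (hm : m' ≤ m) (hv : m ≤ f v) (hU : v ∈ U → m' < f v) :
    m' ≤ spend f U v := by
  by_cases h : v ∈ U
  · exact Nat.le_of_lt_succ ((hU h).trans_le (le_spend_add_one f U v))
  · exact hm.trans (hv.trans_eq (spend_of_notMem h).symm)

theorem sum_le_sum_spend_add_card (f : α → ℕ) (U P : Finset α) :
    ∑ v ∈ P, f v ≤ ∑ v ∈ P, spend f U v + #(P ∩ U) := by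
  rw [← filter_mem_eq_inter, card_filter, ← sum_add_distrib]
  refine sum_le_sum fun v _ => ?_
  unfold spend
  omega

section Staggered

variable {t t' : ℕ} {L : List (Finset α)}

theorem Staggered.spend_of_lt (h : Staggered f t L) (ht : t' < t) :
    Staggered (spend f U) t' L :=
  h.mono fun _ _ v _ => by have := le_spend_add_one f U v; omega

theorem Staggered.spend_of_disjoint (h : Staggered f t L) (hL : ∀ P ∈ L, Disjoint P U)
    (ht : t' ≤ t) : Staggered (spend f U) t' L :=
  h.mono fun P hP v hv => by
    have := spend_of_notMem (f := f) (disjoint_left.1 (hL P hP) hv)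
    omega

theorem exists_first_hit (h : ¬ ∀ P ∈ L, Disjoint P U) :
    ∃ L₁ P L₂, L = L₁ ++ P :: L₂ ∧ (P ∩ U).Nonempty ∧ ∀ Q ∈ L₁, Disjoint Q U := by
  induction L with
  | nil => simp at h
  | cons P L ih =>
    by_cases hP : Disjoint P U
    · obtain ⟨L₁, Q, L₂, rfl, hQ, hL₁⟩ := ih (by simpa [hP] using h)
      exact ⟨P :: L₁, Q, L₂, rfl, hQ, List.forall_mem_cons.2 ⟨hP, hL₁⟩⟩
    · exact ⟨[], P, L, rfl, not_disjoint_iff_nonempty_inter.1 hP, by simp⟩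

theorem Staggered.exists_serve (h : Staggered f t L) (hL : ¬ ∀ P ∈ L, Disjoint P U) :
    ∃ L₁ P L₂, L = L₁ ++ P :: L₂ ∧ (P ∩ U).Nonempty ∧
      Staggered (spend f U) t (L₁ ++ (P \ U) :: L₂) := by
  obtain ⟨L₁, P, L₂, rfl, hP, hL₁⟩ := exists_first_hit hL
  obtain ⟨h₁, hPf, h₂⟩ := staggered_append.1 h
  refine ⟨L₁, P, L₂, rfl, hP, staggered_append.2 ⟨h₁.spend_of_disjoint hL₁ le_rfl, ?_, ?_⟩⟩
  · intro v hv
    rw [mem_sdiff] at hv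
    rw [spend_of_notMem hv.2]
    exact hPf v hv.1
  · have := card_sdiff_add_card_inter P U
    have := hP.card_pos
    exact h₂.spend_of_lt (by omega)

end Staggered

section Bounds

variable {m m' n n' s s' : ℕ}

theorem PairBound.spend (h : PairBound f m n P) (hm : m' ≤ m)
    (hlow : ∀ v ∈ P, v ∈ U → m' < f v) (hn : n' + #(P ∩ U) ≤ n) :
    PairBound (spend f U) m' n' P where
  card_eq := h.card_eq
  le_apply v hv := le_spend hm (h.le_apply v hv) (hlow v hv)
  le_sum := by
    have := h.le_sum
    have := sum_le_sum_spend_add_card f U P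
    omega

theorem TripleBound.spend (h : TripleBound f m n s T) (hm : m' ≤ m)
    (hlow : ∀ v ∈ T, v ∈ U → m' < f v) (hn : n' < n)
    (hadd : ∀ u ∈ T, ∀ v ∈ T, u ∈ U → v ∈ U → u ≠ v → n' < f u + f v)
    (hs : n' + s' + #(T ∩ U) ≤ n + s) :
    TripleBound (spend f U) m' n' s' T where
  card_eq := h.card_eq
  le_apply v hv := le_spend hm (h.le_apply v hv) (hlow v hv)
  le_add u hu v hv huv := by
    have := h.le_add u hu v hv huv
    have := hadd u hu v hv
    unfold OnlineOhba.spend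
    split_ifs <;> grind
  le_sum := by
    have := h.le_sum
    have := sum_le_sum_spend_add_card f U T
    omega

end Bounds

end Spend

/-- A decomposition of the remaining graph into independent parts, as used by the invariant of the
winning strategy. The lists `front` and `back` are ordered by increasing demand for tokens, and may
contain empty parts. -/
structure PartSystem (α : Type*) where
  front : List (Finset α)
  pairs : Multiset (Finset α)
  triples : Multiset (Finset α)
  back : List (Finset α)

namespace PartSystem

section Defs

variable {α : Type*}

/-- All parts of the system. -/
def parts (c : PartSystem α) : Multiset (Finset α) := c.front + c.pairs + c.triples + c.back

/-- The number of tokens required on every vertex of a pair or triple. -/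
def low (c : PartSystem α) : ℕ := c.pairs.card + c.triples.card

/-- The number of vertices of a valid system. -/
def size (c : PartSystem α) : ℕ :=
  weight c.front + 2 * c.pairs.card + 3 * c.triples.card + weight c.back

/-- The number of pairs and triples plus the number of vertices in `front`. -/
def rank (c : PartSystem α) : ℕ := weight c.front + c.low

/-- The token requirements under which the player colouring the graph wins. -/
structure Valid (c : PartSystem α) (f : α → ℕ) : Prop where
  front : Staggered f (c.low + 1) c.front
  pairs : ∀ P ∈ c.pairs, PairBound f c.low c.size P
  triples : ∀ T ∈ c.triples, TripleBound f c.low c.size c.rank T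
  back : Staggered f (c.rank + c.triples.card + 1) c.back

theorem mem_parts {c : PartSystem α} {P : Finset α} :
    P ∈ c.parts ↔ P ∈ c.front ∨ P ∈ c.pairs ∨ P ∈ c.triples ∨ P ∈ c.back := by
  simp [parts, or_assoc]

theorem Valid.pos {c : PartSystem α} {f : α → ℕ} (h : c.Valid f) {P : Finset α}
    (hP : P ∈ c.parts) {v : α} (hv : v ∈ P) : 0 < f v := by
  rcases mem_parts.1 hP with hP | hP | hP | hP
  · have := h.front.le_apply hP hv
    omega
  · have := (h.pairs P hP).le_apply v hv
    have := Multiset.card_pos_iff_exists_mem.2 ⟨P, hP⟩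
    unfold low at *
    omega
  · have := (h.triples P hP).le_apply v hv
    have := Multiset.card_pos_iff_exists_mem.2 ⟨P, hP⟩
    unfold low at *
    omega
  · have := h.back.le_apply hP hv
    omega

end Defs

section Replies

variable {α : Type*} [DecidableEq α] {c : PartSystem α} {f : α → ℕ} {U P T : Finset α}

/-- The player can answer the presented set `U` by colouring `P ∩ U` for a single part `P`, and
refile the rest of `P` so that the system is valid for the tokens left. -/
def HasReply (c : PartSystem α) (f : α → ℕ) (U : Finset α) : Prop :=
  ∃ (c' : PartSystem α) (P : Finset α), (P ∩ U).Nonempty ∧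
    P ::ₘ c'.parts = (P \ U) ::ₘ c.parts ∧ c'.Valid (spend f U)

/-- No pair or triple is presented as a whole. -/
def NoFullBlock (c : PartSystem α) (U : Finset α) : Prop :=
  ∀ P ∈ c.pairs + c.triples, ¬ P ⊆ U

/-- No two presented vertices of a triple have the least number of tokens a valid system allows. -/
def NoTightPair (c : PartSystem α) (f : α → ℕ) (U : Finset α) : Prop :=
  ∀ T ∈ c.triples, ∀ u ∈ T, ∀ v ∈ T, u ∈ U → v ∈ U → u ≠ v → c.size ≤ f u + f v

/-- No presented vertex of a pair or triple has the least number of tokens a valid system allows. -/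
def NoTightVertex (c : PartSystem α) (f : α → ℕ) (U : Finset α) : Prop :=
  ∀ P ∈ c.pairs + c.triples, ∀ v ∈ P, v ∈ U → c.low < f v

theorem NoFullBlock.card_inter_lt (h : c.NoFullBlock U) (hP : P ∈ c.pairs + c.triples) :
    #(P ∩ U) < #P :=
  card_lt_card (inter_subset_left.ssubset_of_ne fun he => h P hP (inter_eq_left.1 he))

theorem Valid.pairBound_spend (h : c.Valid f) (hP : P ∈ c.pairs) {m n : ℕ} (hm : m ≤ c.low)
    (hlow : m < c.low ∨ c.NoTightVertex f U) (hn : n + 1 < c.size ∨ n < c.size ∧ c.NoFullBlock U) :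
    PairBound (spend f U) m n P := by
  have hPc : P ∈ c.pairs + c.triples := Multiset.mem_add.2 (.inl hP)
  have hcard := (h.pairs P hP).card_eq
  refine (h.pairs P hP).spend hm (fun v hv hvU => ?_) ?_
  · exact hlow.elim (fun hlt => hlt.trans_le ((h.pairs P hP).le_apply v hv))
      fun ht => hm.trans_lt (ht P hPc v hv hvU)
  · rcases hn with hn | ⟨hn, hfull⟩
    · have := card_le_card (inter_subset_left : P ∩ U ⊆ P)
      omega
    · have := hfull.card_inter_lt hPc
      omega

theorem Valid.tripleBound_spend (h : c.Valid f) (hT : T ∈ c.triples) {m n s : ℕ} (hm : m ≤ c.low)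
    (hlow : m < c.low ∨ c.NoTightVertex f U) (hn : n + 1 < c.size ∨ n < c.size ∧ c.NoTightPair f U)
    (hs : n + s + #(T ∩ U) ≤ c.size + c.rank) :
    TripleBound (spend f U) m n s T := by
  have hTc : T ∈ c.pairs + c.triples := Multiset.mem_add.2 (.inr hT)
  refine (h.triples T hT).spend hm (fun v hv hvU => ?_) (by omega)
    (fun u hu v hv huU hvU huv => ?_) hs
  · exact hlow.elim (fun hlt => hlt.trans_le ((h.triples T hT).le_apply v hv))
      fun ht => hm.trans_lt (ht T hTc v hv hvU)
  · rcases hn with hn | ⟨hn, ht⟩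
    · have := (h.triples T hT).le_add u hu v hv huv
      omega
    · exact hn.trans_le (ht T hT u hu v hv huU hvU huv)

theorem Valid.card_triple_inter_le (h : c.Valid f) (hfull : c.NoFullBlock U) (hT : T ∈ c.triples) :
    #(T ∩ U) ≤ 2 := by
  have := hfull.card_inter_lt (Multiset.mem_add.2 (.inr hT))
  have := (h.triples T hT).card_eq
  omega

theorem Valid.hasReply_of_triple_subset (h : c.Valid f) (hT : T ∈ c.triples) (hTU : T ⊆ U) :
    c.HasReply f U := by
  obtain ⟨C, hC⟩ := Multiset.exists_cons_of_mem hT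
  have hcard := (h.triples T hT).card_eq
  have hrest : T \ U = ∅ := sdiff_eq_empty_iff_subset.2 hTU
  have hCcard : c.triples.card = C.card + 1 := by simp [hC]
  let c' : PartSystem α := { c with front := (T \ U) :: c.front, triples := C }
  have hlow : c'.low + 1 = c.low := by simp only [c', low]; omega
  have hsize : c'.size + 3 = c.size := by
    simp only [c', size, weight_cons, hrest, card_empty]
    omega
  have hrank : c'.rank + 1 = c.rank := by
    simp only [rank, ← hlow, c', weight_cons, hrest, card_empty]
    omega
  have hback : c'.rank + c'.triples.card < c.rank + c.triples.card := by
    change c'.rank + C.card < _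
    omega
  refine ⟨c', T, ?_, ?_, ⟨by simp [hrest], h.front.spend_of_lt (by rw [hrest, card_empty]; omega)⟩,
    fun P hP => ?_, fun P hP => ?_, h.back.spend_of_lt (by omega)⟩
  · rw [inter_eq_left.2 hTU, ← card_pos]
    omega
  · simp only [c', parts, hC, ← Multiset.cons_coe, ← Multiset.singleton_add]
    abel
  · exact h.pairBound_spend hP (by omega) (.inl (by omega)) (.inl (by omega))
  · have hPc : P ∈ c.triples := hC ▸ Multiset.mem_cons_of_mem hP
    have := (h.triples P hPc).card_eq
    have := card_le_card (inter_subset_left : P ∩ U ⊆ P)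
    exact h.tripleBound_spend hPc (by omega) (.inl (by omega)) (.inl (by omega)) (by omega)

theorem Valid.hasReply_of_pair_subset (h : c.Valid f) (hP : P ∈ c.pairs) (hPU : P ⊆ U) :
    c.HasReply f U := by
  obtain ⟨B, hB⟩ := Multiset.exists_cons_of_mem hP
  have hcard := (h.pairs P hP).card_eq
  have hrest : P \ U = ∅ := sdiff_eq_empty_iff_subset.2 hPU
  have hBcard : c.pairs.card = B.card + 1 := by simp [hB]
  let c' : PartSystem α := { c with front := (P \ U) :: c.front, pairs := B }
  have hlow : c'.low + 1 = c.low := by simp only [c', low]; omega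
  have hsize : c'.size + 2 = c.size := by
    simp only [c', size, weight_cons, hrest, card_empty]
    omega
  have hrank : c'.rank + 1 = c.rank := by
    simp only [rank, ← hlow, c', weight_cons, hrest, card_empty]
    omega
  have hback : c'.rank + c'.triples.card < c.rank + c.triples.card := by
    change c'.rank + c.triples.card < _
    omega
  refine ⟨c', P, ?_, ?_, ⟨by simp [hrest], h.front.spend_of_lt (by rw [hrest, card_empty]; omega)⟩,
    fun Q hQ => ?_, fun T hT => ?_, h.back.spend_of_lt (by omega)⟩
  · rw [inter_eq_left.2 hPU, ← card_pos]
    omega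
  · simp only [c', parts, hB, ← Multiset.cons_coe, ← Multiset.singleton_add]
    abel
  · have hQc : Q ∈ c.pairs := hB ▸ Multiset.mem_cons_of_mem hQ
    exact h.pairBound_spend hQc (by omega) (.inl (by omega)) (.inl (by omega))
  · have := (h.triples T hT).card_eq
    have := card_le_card (inter_subset_left : T ∩ U ⊆ T)
    exact h.tripleBound_spend hT (by omega) (.inl (by omega)) (.inl (by omega)) (by omega)

theorem Valid.hasReply_of_tight_pair (h : c.Valid f) (hfull : c.NoFullBlock U)
    (htight : ¬ c.NoTightPair f U) : c.HasReply f U := by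
  simp only [NoTightPair, not_forall, not_le] at htight
  obtain ⟨T, hT, u, hu, v, hv, huU, hvU, huv, hlt⟩ := htight
  obtain ⟨C, hC⟩ := Multiset.exists_cons_of_mem hT
  have hcard := (h.triples T hT).card_eq
  have hCcard : c.triples.card = C.card + 1 := by simp [hC]
  have hrest : #(T \ U) = 1 := by
    have := h.card_triple_inter_le hfull hT
    have := one_lt_card.2 ⟨u, mem_inter.2 ⟨hu, huU⟩, v, mem_inter.2 ⟨hv, hvU⟩, huv⟩
    have := card_sdiff_add_card_inter T U
    omega
  let c' : PartSystem α := { c with front := c.front ++ [T \ U], triples := C }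
  have hlow : c'.low + 1 = c.low := by simp only [c', low]; omega
  have hsize : c'.size + 2 = c.size := by
    simp only [c', size, weight_cons, weight_append, weight_nil, hrest]
    omega
  have hrank : c'.rank = c.rank := by
    simp only [rank, ← hlow, c', weight_cons, weight_append, weight_nil, hrest]
    omega
  have hback : c'.rank + c'.triples.card < c.rank + c.triples.card := by
    change c'.rank + C.card < _
    omega
  refine ⟨c', T, ⟨u, mem_inter.2 ⟨hu, huU⟩⟩, ?_,
    staggered_append.2 ⟨h.front.spend_of_lt (by omega), fun w hw => ?_, trivial⟩,
    fun P hP => ?_, fun P hP => ?_, h.back.spend_of_lt (by omega)⟩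
  · simp only [c', parts, hC, ← Multiset.coe_add, Multiset.coe_singleton,
      ← Multiset.singleton_add]
    abel
  · rw [mem_sdiff] at hw
    rw [spend_of_notMem hw.2]
    have := (h.triples T hT).le_add_add hu hv hw.1 huv (ne_of_mem_of_not_mem huU hw.2)
      (ne_of_mem_of_not_mem hvU hw.2)
    have : c.rank = weight c.front + c.low := rfl
    omega
  · exact h.pairBound_spend hP (by omega) (.inl (by omega)) (.inl (by omega))
  · have hPc : P ∈ c.triples := hC ▸ Multiset.mem_cons_of_mem hP
    have := h.card_triple_inter_le hfull hPc
    exact h.tripleBound_spend hPc (by omega) (.inl (by omega)) (.inl (by omega)) (by omega)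

theorem Valid.hasReply_of_tight_vertex_of_triple (h : c.Valid f) (hfull : c.NoFullBlock U)
    (htight : c.NoTightPair f U) (hT : T ∈ c.triples) {u : α} (hu : u ∈ T) (huU : u ∈ U)
    (hle : f u ≤ c.low) : c.HasReply f U := by
  obtain ⟨C, hC⟩ := Multiset.exists_cons_of_mem hT
  have hcard := (h.triples T hT).card_eq
  have hCcard : c.triples.card = C.card + 1 := by simp [hC]
  have hrest : #(T \ U) ≤ 2 := by
    have := card_pos.2 ⟨u, mem_inter.2 ⟨hu, huU⟩⟩
    have := card_sdiff_add_card_inter T U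
    omega
  let c' : PartSystem α := { c with triples := C, back := c.back ++ [T \ U] }
  have hlow : c'.low + 1 = c.low := by simp only [c', low]; omega
  have hsize : c'.size + 3 = c.size + #(T \ U) := by
    simp only [c', size, weight_append, weight_cons, weight_nil]
    omega
  have hrank : c'.rank + 1 = c.rank := by simp only [rank, ← hlow, c']; omega
  have hback : c'.rank + c'.triples.card < c.rank + c.triples.card := by
    change c'.rank + C.card < _
    omega
  refine ⟨c', T, ⟨u, mem_inter.2 ⟨hu, huU⟩⟩, ?_, h.front.spend_of_lt (by omega),
    fun P hP => ?_, fun P hP => ?_,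
    staggered_append.2 ⟨h.back.spend_of_lt (by omega), fun w hw => ?_, trivial⟩⟩
  · simp only [c', parts, hC, ← Multiset.coe_add, Multiset.coe_singleton,
      ← Multiset.singleton_add]
    abel
  · exact h.pairBound_spend hP (by omega) (.inl (by omega)) (.inr ⟨by omega, hfull⟩)
  · have hPc : P ∈ c.triples := hC ▸ Multiset.mem_cons_of_mem hP
    have := h.card_triple_inter_le hfull hPc
    exact h.tripleBound_spend hPc (by omega) (.inl (by omega)) (.inr ⟨by omega, htight⟩) (by omega)
  · rw [mem_sdiff] at hw
    rw [spend_of_notMem hw.2]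
    have := (h.triples T hT).le_add u hu w hw.1 (ne_of_mem_of_not_mem huU hw.2)
    change c'.rank + C.card + 1 + weight c.back ≤ f w
    simp only [size, rank, low] at *
    omega

theorem Valid.hasReply_of_tight_vertex_of_pair (h : c.Valid f) (hfull : c.NoFullBlock U)
    (htight : c.NoTightPair f U) (hP : P ∈ c.pairs) {u : α} (hu : u ∈ P) (huU : u ∈ U)
    (hle : f u ≤ c.low) : c.HasReply f U := by
  obtain ⟨B, hB⟩ := Multiset.exists_cons_of_mem hP
  have hcard := (h.pairs P hP).card_eq
  have hBcard : c.pairs.card = B.card + 1 := by simp [hB]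
  have hrest : #(P \ U) ≤ 1 := by
    have := card_pos.2 ⟨u, mem_inter.2 ⟨hu, huU⟩⟩
    have := card_sdiff_add_card_inter P U
    omega
  let c' : PartSystem α := { c with pairs := B, back := c.back ++ [P \ U] }
  have hlow : c'.low + 1 = c.low := by simp only [c', low]; omega
  have hsize : c'.size + 2 = c.size + #(P \ U) := by
    simp only [c', size, weight_append, weight_cons, weight_nil]
    omega
  have hrank : c'.rank + 1 = c.rank := by simp only [rank, ← hlow, c']; omega
  have hback : c'.rank + c'.triples.card < c.rank + c.triples.card := by
    change c'.rank + c.triples.card < _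
    omega
  refine ⟨c', P, ⟨u, mem_inter.2 ⟨hu, huU⟩⟩, ?_, h.front.spend_of_lt (by omega),
    fun Q hQ => ?_, fun T hT => ?_,
    staggered_append.2 ⟨h.back.spend_of_lt (by omega), fun w hw => ?_, trivial⟩⟩
  · simp only [c', parts, hB, ← Multiset.coe_add, Multiset.coe_singleton,
      ← Multiset.singleton_add]
    abel
  · have hQc : Q ∈ c.pairs := hB ▸ Multiset.mem_cons_of_mem hQ
    exact h.pairBound_spend hQc (by omega) (.inl (by omega)) (.inr ⟨by omega, hfull⟩)
  · have := h.card_triple_inter_le hfull hT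
    exact h.tripleBound_spend hT (by omega) (.inl (by omega)) (.inr ⟨by omega, htight⟩) (by omega)
  · rw [mem_sdiff] at hw
    rw [spend_of_notMem hw.2]
    have := (h.pairs P hP).le_add hu hw.1 (ne_of_mem_of_not_mem huU hw.2)
    change c'.rank + c.triples.card + 1 + weight c.back ≤ f w
    simp only [size, rank, low] at *
    omega

/-- None of the blocks of size two or three forces the player to answer in it. -/
structure Slack (c : PartSystem α) (f : α → ℕ) (U : Finset α) : Prop where
  noFullBlock : c.NoFullBlock U
  noTightPair : c.NoTightPair f U
  noTightVertex : c.NoTightVertex f U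

theorem Valid.hasReply_of_not_slack (h : c.Valid f) (hslack : ¬ c.Slack f U) :
    c.HasReply f U := by
  by_cases hfull : c.NoFullBlock U
  swap
  · simp only [NoFullBlock, Multiset.mem_add, not_forall, not_not] at hfull
    obtain ⟨P, hP | hP, hPU⟩ := hfull
    · exact h.hasReply_of_pair_subset hP hPU
    · exact h.hasReply_of_triple_subset hP hPU
  by_cases hpair : c.NoTightPair f U
  swap
  · exact h.hasReply_of_tight_pair hfull hpair
  have hvertex : ¬ c.NoTightVertex f U := fun hvertex => hslack ⟨hfull, hpair, hvertex⟩
  simp only [NoTightVertex, Multiset.mem_add, not_forall, not_lt] at hvertex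
  obtain ⟨P, hP | hP, u, hu, huU, hle⟩ := hvertex
  · exact h.hasReply_of_tight_vertex_of_pair hfull hpair hP hu huU hle
  · exact h.hasReply_of_tight_vertex_of_triple hfull hpair hP hu huU hle

theorem Valid.hasReply_of_front (h : c.Valid f) (hslack : c.Slack f U)
    (hhit : ¬ ∀ P ∈ c.front, Disjoint P U) : c.HasReply f U := by
  obtain ⟨L₁, P, L₂, hL, hPU, hfront⟩ := h.front.exists_serve hhit
  let c' : PartSystem α := { c with front := L₁ ++ (P \ U) :: L₂ }
  have hcard : weight c'.front < weight c.front := by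
    have := card_sdiff_add_card_inter P U
    have := hPU.card_pos
    simp only [c', hL, weight_append, weight_cons]
    omega
  have hlow : c'.low = c.low := rfl
  have hsize : c'.size < c.size := by
    change _ + 2 * c.pairs.card + 3 * c.triples.card + weight c.back < c.size
    simp only [size]
    omega
  have hrank : c'.rank < c.rank := by simp only [rank]; omega
  have hback : c'.rank + c'.triples.card < c.rank + c.triples.card := by
    change c'.rank + c.triples.card < _
    omega
  refine ⟨c', P, hPU, ?_, hfront, fun Q hQ => ?_, fun T hT => ?_, h.back.spend_of_lt (by omega)⟩
  · simp only [c', parts, hL, ← Multiset.coe_add, ← Multiset.cons_coe, ← Multiset.singleton_add]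
    abel
  · exact h.pairBound_spend hQ hlow.le (.inr hslack.noTightVertex)
      (.inr ⟨by omega, hslack.noFullBlock⟩)
  · have := h.card_triple_inter_le hslack.noFullBlock hT
    exact h.tripleBound_spend hT hlow.le (.inr hslack.noTightVertex)
      (.inr ⟨by omega, hslack.noTightPair⟩) (by omega)

theorem Valid.hasReply_of_one_lt_card_inter (h : c.Valid f) (hfull : c.NoFullBlock U)
    (hfront : ∀ P ∈ c.front, Disjoint P U) (hT : T ∈ c.triples) (hhit : 1 < #(T ∩ U)) :
    c.HasReply f U := by
  obtain ⟨C, hC⟩ := Multiset.exists_cons_of_mem hT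
  have hcard := (h.triples T hT).card_eq
  have hCcard : c.triples.card = C.card + 1 := by simp [hC]
  have hrest : #(T \ U) = 1 := by
    have := h.card_triple_inter_le hfull hT
    have := card_sdiff_add_card_inter T U
    omega
  let c' : PartSystem α := { c with front := (T \ U) :: c.front, triples := C }
  have hlow : c'.low + 1 = c.low := by simp only [c', low]; omega
  have hsize : c'.size + 2 = c.size := by simp only [c', size, weight_cons, hrest]; omega
  have hrank : c'.rank = c.rank := by simp only [rank, ← hlow, c', weight_cons, hrest]; omega
  have hback : c'.rank + c'.triples.card < c.rank + c.triples.card := by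
    change c'.rank + C.card < _
    omega
  refine ⟨c', T, card_pos.1 (by omega), ?_,
    ⟨fun v hv => ?_, h.front.spend_of_disjoint hfront (by omega)⟩,
    fun P hP => ?_, fun P hP => ?_, h.back.spend_of_lt (by omega)⟩
  · simp only [c', parts, hC, ← Multiset.cons_coe, ← Multiset.singleton_add]
    abel
  · rw [mem_sdiff] at hv
    rw [spend_of_notMem hv.2, hlow]
    exact (h.triples T hT).le_apply v hv.1
  · exact h.pairBound_spend hP (by omega) (.inl (by omega)) (.inl (by omega))
  · have hPc : P ∈ c.triples := hC ▸ Multiset.mem_cons_of_mem hP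
    have := h.card_triple_inter_le hfull hPc
    exact h.tripleBound_spend hPc (by omega) (.inl (by omega)) (.inl (by omega)) (by omega)

section SingleHits

variable (h : c.Valid f) (hslack : c.Slack f U) (hfront : ∀ P ∈ c.front, Disjoint P U)
  (htriples : ∀ T ∈ c.triples, #(T ∩ U) ≤ 1)

include h hslack hfront htriples

theorem Valid.hasReply_of_back (hhit : ¬ ∀ P ∈ c.back, Disjoint P U) : c.HasReply f U := by
  obtain ⟨L₁, P, L₂, hL, hPU, hback⟩ := h.back.exists_serve hhit
  let c' : PartSystem α := { c with back := L₁ ++ (P \ U) :: L₂ }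
  have hcard : weight c'.back < weight c.back := by
    have := card_sdiff_add_card_inter P U
    have := hPU.card_pos
    simp only [c', hL, weight_append, weight_cons]
    omega
  have hsize : c'.size < c.size := by
    change weight c.front + 2 * c.pairs.card + 3 * c.triples.card + _ < c.size
    simp only [size]
    omega
  refine ⟨c', P, hPU, ?_, h.front.spend_of_disjoint hfront le_rfl,
    fun Q hQ => ?_, fun T hT => ?_, hback⟩
  · simp only [c', parts, hL, ← Multiset.coe_add, ← Multiset.cons_coe, ← Multiset.singleton_add]
    abel
  · exact h.pairBound_spend hQ le_rfl (.inr hslack.noTightVertex)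
      (.inr ⟨hsize, hslack.noFullBlock⟩)
  · have := htriples T hT
    refine h.tripleBound_spend hT le_rfl (.inr hslack.noTightVertex)
      (.inr ⟨hsize, hslack.noTightPair⟩) ?_
    change _ + c.rank + _ ≤ _
    omega

variable (hback : ∀ P ∈ c.back, Disjoint P U)

include hback

theorem Valid.hasReply_of_triple (hT : T ∈ c.triples) (hhit : (T ∩ U).Nonempty) :
    c.HasReply f U := by
  obtain ⟨C, hC⟩ := Multiset.exists_cons_of_mem hT
  have hCcard : c.triples.card = C.card + 1 := by simp [hC]
  have hrest : #(T \ U) = 2 := by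
    have := (h.triples T hT).card_eq
    have := htriples T hT
    have := hhit.card_pos
    have := card_sdiff_add_card_inter T U
    omega
  let c' : PartSystem α := { c with pairs := (T \ U) ::ₘ c.pairs, triples := C }
  have hlow : c'.low = c.low := by simp only [c', low, Multiset.card_cons]; omega
  have hsize : c'.size + 1 = c.size := by simp only [c', size, Multiset.card_cons]; omega
  have hrank : c'.rank = c.rank := by simp only [rank, hlow, c']
  refine ⟨c', T, hhit, ?_, h.front.spend_of_disjoint hfront (by omega),
    Multiset.forall_mem_cons.2 ⟨⟨hrest, fun v hv => ?_, ?_⟩, fun P hP => ?_⟩, fun P hP => ?_,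
    h.back.spend_of_disjoint hback (by change c'.rank + C.card + 1 ≤ _; omega)⟩
  · simp only [c', parts, hC, ← Multiset.singleton_add]
    abel
  · rw [mem_sdiff] at hv
    rw [spend_of_notMem hv.2, hlow]
    exact (h.triples T hT).le_apply v hv.1
  · obtain ⟨v, w, hvw, hTU⟩ := card_eq_two.1 hrest
    have hv : v ∈ T \ U := by simp [hTU]
    have hw : w ∈ T \ U := by simp [hTU]
    rw [mem_sdiff] at hv hw
    have := (h.triples T hT).le_add v hv.1 w hw.1 hvw
    rw [hTU, sum_pair hvw, spend_of_notMem hv.2, spend_of_notMem hw.2]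
    omega
  · exact h.pairBound_spend hP hlow.le (.inr hslack.noTightVertex)
      (.inr ⟨by omega, hslack.noFullBlock⟩)
  · have hPc : P ∈ c.triples := hC ▸ Multiset.mem_cons_of_mem hP
    have := htriples P hPc
    exact h.tripleBound_spend hPc hlow.le (.inr hslack.noTightVertex)
      (.inr ⟨by omega, hslack.noTightPair⟩) (by omega)

theorem Valid.hasReply_of_pair (hP : P ∈ c.pairs) (hhit : (P ∩ U).Nonempty) :
    c.HasReply f U := by
  obtain ⟨B, hB⟩ := Multiset.exists_cons_of_mem hP
  have hBcard : c.pairs.card = B.card + 1 := by simp [hB]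
  have hrest : #(P \ U) = 1 := by
    have := (h.pairs P hP).card_eq
    have := hslack.noFullBlock.card_inter_lt (Multiset.mem_add.2 (.inl hP))
    have := hhit.card_pos
    have := card_sdiff_add_card_inter P U
    omega
  let c' : PartSystem α := { c with front := (P \ U) :: c.front, pairs := B }
  have hlow : c'.low + 1 = c.low := by simp only [c', low]; omega
  have hsize : c'.size + 1 = c.size := by simp only [c', size, weight_cons, hrest]; omega
  have hrank : c'.rank = c.rank := by simp only [rank, ← hlow, c', weight_cons, hrest]; omega
  refine ⟨c', P, hhit, ?_, ⟨fun v hv => ?_, h.front.spend_of_disjoint hfront (by omega)⟩,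
    fun Q hQ => ?_, fun T hT => ?_,
    h.back.spend_of_disjoint hback (by change c'.rank + c.triples.card + 1 ≤ _; omega)⟩
  · simp only [c', parts, hB, ← Multiset.cons_coe, ← Multiset.singleton_add]
    abel
  · rw [mem_sdiff] at hv
    rw [spend_of_notMem hv.2, hlow]
    exact (h.pairs P hP).le_apply v hv.1
  · have hQc : Q ∈ c.pairs := hB ▸ Multiset.mem_cons_of_mem hQ
    exact h.pairBound_spend hQc (by omega) (.inl (by omega)) (.inr ⟨by omega, hslack.noFullBlock⟩)
  · have := htriples T hT
    exact h.tripleBound_spend hT (by omega) (.inl (by omega))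
      (.inr ⟨by omega, hslack.noTightPair⟩) (by omega)

end SingleHits

theorem Valid.hasReply_of_slack (h : c.Valid f) (hslack : c.Slack f U) (hP : P ∈ c.parts)
    (hPU : (P ∩ U).Nonempty) : c.HasReply f U := by
  by_cases hfront : ∀ Q ∈ c.front, Disjoint Q U
  swap
  · exact h.hasReply_of_front hslack hfront
  by_cases htriples : ∀ T ∈ c.triples, #(T ∩ U) ≤ 1
  swap
  · push Not at htriples
    obtain ⟨T, hT, hTU⟩ := htriples
    exact h.hasReply_of_one_lt_card_inter hslack.noFullBlock hfront hT hTU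
  by_cases hback : ∀ Q ∈ c.back, Disjoint Q U
  swap
  · exact h.hasReply_of_back hslack hfront htriples hback
  rcases mem_parts.1 hP with hP | hP | hP | hP
  · exact absurd hPU (not_nonempty_iff_eq_empty.2 (disjoint_iff_inter_eq_empty.1 (hfront P hP)))
  · exact h.hasReply_of_pair hslack hfront htriples hback hP hPU
  · exact h.hasReply_of_triple hslack hfront htriples hback hP hPU
  · exact absurd hPU (not_nonempty_iff_eq_empty.2 (disjoint_iff_inter_eq_empty.1 (hback P hP)))

theorem Valid.hasReply (h : c.Valid f) (hP : P ∈ c.parts) (hPU : (P ∩ U).Nonempty) :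
    c.HasReply f U := by
  by_cases hslack : c.Slack f U
  · exact h.hasReply_of_slack hslack hP hPU
  · exact h.hasReply_of_not_slack hslack

end Replies

section Choosable

variable {α : Type} [DecidableEq α] {G : SimpleGraph α} {c c' : PartSystem α} {f : α → ℕ}
  {U P X : Finset α}

/-- The parts of the system are independent sets of `G` and cover the vertices in `X`. -/
structure Covers (c : PartSystem α) (G : SimpleGraph α) (X : Finset α) : Prop where
  exists_mem : ∀ x ∈ X, ∃ P ∈ c.parts, x ∈ P
  not_adj : ∀ P ∈ c.parts, ∀ u ∈ P, ∀ v ∈ P, ¬ G.Adj u v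

theorem mem_parts_of_cons_eq (hPU : (P ∩ U).Nonempty)
    (hparts : P ::ₘ c'.parts = (P \ U) ::ₘ c.parts) : P ∈ c.parts := by
  have hmem : P ∈ (P \ U) ::ₘ c.parts := hparts ▸ Multiset.mem_cons_self P c'.parts
  refine (Multiset.mem_cons.1 hmem).resolve_left fun he => ?_
  obtain ⟨v, hv⟩ := hPU
  rw [mem_inter] at hv
  exact (mem_sdiff.1 (he ▸ hv.1)).2 hv.2

theorem Covers.sdiff (h : c.Covers G X) (hPU : (P ∩ U).Nonempty)
    (hparts : P ::ₘ c'.parts = (P \ U) ::ₘ c.parts) : c'.Covers G (X \ (P ∩ U)) where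
  exists_mem x hx := by
    rw [mem_sdiff, mem_inter] at hx
    by_cases hxP : x ∈ P
    · have hxU : x ∈ P \ U := mem_sdiff.2 ⟨hxP, fun hxU => hx.2 ⟨hxP, hxU⟩⟩
      have hmem : P \ U ∈ P ::ₘ c'.parts := hparts ▸ Multiset.mem_cons_self _ _
      refine ⟨P \ U, (Multiset.mem_cons.1 hmem).resolve_left fun he => ?_, hxU⟩
      exact hPU.ne_empty (disjoint_iff_inter_eq_empty.1 (sdiff_eq_left.1 he))
    · obtain ⟨Q, hQ, hxQ⟩ := h.exists_mem x hx.1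
      have hmem : Q ∈ P ::ₘ c'.parts := hparts ▸ Multiset.mem_cons_of_mem hQ
      exact ⟨Q, (Multiset.mem_cons.1 hmem).resolve_left fun he => hxP (he ▸ hxQ), hxQ⟩
  not_adj Q hQ := by
    have hmem : Q ∈ (P \ U) ::ₘ c.parts := hparts ▸ Multiset.mem_cons_of_mem hQ
    rcases Multiset.mem_cons.1 hmem with rfl | hQc
    · intro u hu v hv
      exact h.not_adj P (mem_parts_of_cons_eq hPU hparts) u (mem_sdiff.1 hu).1 v (mem_sdiff.1 hv).1
    · exact h.not_adj Q hQc

theorem Valid.onlineChoosableAux (h : c.Valid f) (hX : c.Covers G X) {n : ℕ} (hn : #X < n) :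
    OnlineChoosableAux G n X f := by
  induction n generalizing c f X with
  | zero => simp at hn
  | succ n ih =>
    by_cases hedge : ∃ u ∈ X, ∃ v ∈ X, G.Adj u v
    · refine .inr ⟨hedge, fun U hUX ⟨x, hxU⟩ => ?_⟩
      obtain ⟨Q, hQ, hxQ⟩ := hX.exists_mem x (hUX hxU)
      obtain ⟨c', P, hPU, hparts, hc'⟩ := h.hasReply hQ ⟨x, mem_inter.2 ⟨hxQ, hxU⟩⟩
      have hcard : #(X \ (P ∩ U)) < #X :=
        card_lt_card (sdiff_ssubset (inter_subset_right.trans hUX) hPU)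
      have hindep := hX.not_adj P (mem_parts_of_cons_eq hPU hparts)
      exact ⟨P ∩ U, inter_subset_right,
        fun u hu v hv => hindep u (mem_inter.1 hu).1 v (mem_inter.1 hv).1,
        ih hc' (hX.sdiff hPU hparts) (by omega)⟩
    · refine .inl ⟨by simpa using hedge, fun v hv => ?_⟩
      obtain ⟨P, hP, hvP⟩ := hX.exists_mem v hv
      exact h.pos hP hvP

end Choosable

section OfList

variable {α : Type*} {L : List (Finset α)}

/-- The system in which the parts of `L` are filed by their size; it is meant for parts of size at
most three, and larger parts are dropped. -/
def ofList (L : List (Finset α)) : PartSystem α where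
  front := L.filter (#· ≤ 1)
  pairs := L.filter (#· = 2)
  triples := L.filter (#· = 3)
  back := []

theorem mem_parts_ofList (hL : ∀ P ∈ L, #P ≤ 3) {P : Finset α} :
    P ∈ (ofList L).parts ↔ P ∈ L := by
  have (hP : P ∈ L) : #P ≤ 1 ∨ #P = 2 ∨ #P = 3 := by have := hL P hP; omega
  simp only [mem_parts, ofList, List.mem_filter, Multiset.mem_coe, decide_eq_true_eq,
    List.not_mem_nil, or_false, ← and_or_left]
  tauto

theorem size_ofList (hL : ∀ P ∈ L, #P ≤ 3) : (ofList L).size = weight L := by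
  induction L with
  | nil => rfl
  | cons P L ih =>
    rw [List.forall_mem_cons] at hL
    have hsize := ih hL.2
    have := hL.1
    simp only [size, ofList, Multiset.coe_card, List.filter_cons, decide_eq_true_eq,
      weight_cons, weight_nil] at hsize ⊢
    split_ifs <;> grind [weight_cons]

theorem rank_ofList_le (L : List (Finset α)) : (ofList L).rank ≤ L.length := by
  induction L with
  | nil => rfl
  | cons P L ih =>
    simp only [rank, low, ofList, Multiset.coe_card, List.filter_cons, decide_eq_true_eq,
      List.length_cons] at ih ⊢
    split_ifs <;> grind [weight_cons]

theorem valid_ofList {k : ℕ} (hL : ∀ P ∈ L, #P ≤ 3) (hlen : L.length ≤ k)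
    (hweight : weight L ≤ 2 * k) : (ofList L).Valid (fun _ => k) := by
  have hsize := size_ofList hL
  have hrank : (ofList L).rank ≤ k := (rank_ofList_le L).trans hlen
  have hlow : (ofList L).low ≤ k := le_add_self.trans hrank
  refine ⟨staggered_const ?_, fun P hP => ?_, fun T hT => ?_, trivial⟩
  · rw [add_right_comm, add_comm _ (weight _)]
    exact Nat.succ_le_succ hrank
  · have hcard : #P = 2 := by simpa using (List.mem_filter.1 (Multiset.mem_coe.1 hP)).2
    refine ⟨hcard, fun _ _ => hlow, ?_⟩
    rw [sum_const, smul_eq_mul, hcard]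
    omega
  · have hcard : #T = 3 := by simpa using (List.mem_filter.1 (Multiset.mem_coe.1 hT)).2
    refine ⟨hcard, fun _ _ => hlow, fun _ _ _ _ _ => by omega, ?_⟩
    rw [sum_const, smul_eq_mul, hcard]
    omega

end OfList

end PartSystem

section Coloring

variable {V : Type} [Fintype V] [DecidableEq V] {G : SimpleGraph V}

theorem onlineChoosable_of_coloring {k : ℕ} (C : G.Coloring (Fin k))
    (hC : ∀ i, #{v | C v = i} ≤ 3) (hV : Fintype.card V ≤ 2 * k) :
    OnlineChoosable G univ (fun _ => k) := by
  let L : List (Finset V) := List.ofFn fun i => univ.filter fun v => C v = i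
  have hL : ∀ P ∈ L, #P ≤ 3 := List.forall_mem_ofFn_iff.2 hC
  have hweight : weight L = Fintype.card V := by
    rw [weight, List.map_ofFn, List.sum_ofFn]
    exact (card_eq_sum_card_fiberwise fun v _ => mem_univ (C v)).symm
  have hcovers : (PartSystem.ofList L).Covers G univ := by
    refine ⟨fun v _ => ⟨univ.filter fun w => C w = C v, ?_, by simp⟩, fun P hP u hu v hv => ?_⟩
    · rw [PartSystem.mem_parts_ofList hL]
      exact List.mem_ofFn.2 ⟨C v, rfl⟩
    · rw [PartSystem.mem_parts_ofList hL] at hP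
      obtain ⟨i, rfl⟩ := List.mem_ofFn.1 hP
      rw [mem_filter] at hu hv
      exact C.not_adj_of_mem_colorClass hu.2 hv.2
  have hvalid := PartSystem.valid_ofList hL (k := k) (by simp [L]) (by omega)
  exact ⟨_, hvalid.onlineChoosableAux hcovers (Nat.lt_succ_self _)⟩

end Coloring

section LowerBound

variable {V : Type} [DecidableEq V] {G : SimpleGraph V} {f : V → ℕ} {S : Finset V} {n : ℕ}

theorem pos_of_onlineChoosableAux (h : OnlineChoosableAux G n S f) {v : V} (hv : v ∈ S) :
    0 < f v := by
  induction n generalizing S f with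
  | zero => exact h.elim
  | succ n ih =>
    rcases h with ⟨-, hpos⟩ | ⟨⟨a, ha, b, hb, hab⟩, hreply⟩
    · exact hpos v hv
    · have hne : (S.erase v).Nonempty := by
        by_cases hav : a = v
        · exact ⟨b, mem_erase.2 ⟨hav ▸ hab.ne', hb⟩⟩
        · exact ⟨a, mem_erase.2 ⟨hav, ha⟩⟩
      obtain ⟨I, hI, -, hS⟩ := hreply _ (erase_subset v S) hne
      have := ih hS (mem_sdiff.2 ⟨hv, fun hvI => notMem_erase v S (hI hvI)⟩)
      exact this.trans_le (Nat.sub_le _ _)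

theorem exists_coloring_lt_of_onlineChoosableAux (h : OnlineChoosableAux G n S f) :
    ∃ c : V → ℕ, (∀ v ∈ S, c v < f v) ∧ ∀ u ∈ S, ∀ v ∈ S, G.Adj u v → c u ≠ c v := by
  induction n generalizing S f with
  | zero => exact h.elim
  | succ n ih =>
    have hfpos (v : V) (hv : v ∈ S) : 0 < f v := pos_of_onlineChoosableAux h hv
    rcases h with ⟨hedge, -⟩ | ⟨⟨a, ha, -⟩, hreply⟩
    · exact ⟨fun _ => 0, hfpos, fun u hu v hv huv => (hedge u hu v hv huv).elim⟩
    · obtain ⟨I, -, hI, hS⟩ := hreply S Subset.rfl ⟨a, ha⟩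
      obtain ⟨c, hlt, hc⟩ := ih hS
      refine ⟨fun v => if v ∈ I then 0 else c v + 1, fun v hv => ?_, fun u hu v hv huv => ?_⟩
      · dsimp only
        split_ifs with hvI
        · exact hfpos v hv
        · have := hlt v (mem_sdiff.2 ⟨hv, hvI⟩)
          rw [if_pos hv] at this
          omega
      · dsimp only
        split_ifs with huI hvI hvI
        · exact (hI u huI v hvI huv).elim
        · exact (Nat.succ_ne_zero _).symm
        · exact Nat.succ_ne_zero _
        · exact fun he => hc u (mem_sdiff.2 ⟨hu, huI⟩) v (mem_sdiff.2 ⟨hv, hvI⟩) huv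
            (Nat.succ.inj he)

end LowerBound

section ChromaticNumber

variable {V : Type} {G H : SimpleGraph V}

theorem chromNum_le_of_colorable {n : ℕ} (h : G.Colorable n) : chromNum G ≤ n := Nat.sInf_le h

theorem colorable_chromNum [Finite V] (G : SimpleGraph V) : G.Colorable (chromNum G) := by
  cases nonempty_fintype V
  exact Nat.sInf_mem (s := {n | G.Colorable n}) ⟨_, G.colorable_of_fintype⟩

theorem chromNum_mono [Finite V] (h : G ≤ H) : chromNum G ≤ chromNum H :=
  chromNum_le_of_colorable ((colorable_chromNum H).mono_left h)

variable [Fintype V] [DecidableEq V]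

theorem colorable_of_onlineChoosable {k : ℕ} (h : OnlineChoosable G univ (fun _ => k)) :
    G.Colorable k := by
  obtain ⟨n, hn⟩ := h
  obtain ⟨c, hlt, hc⟩ := exists_coloring_lt_of_onlineChoosableAux hn
  exact ⟨SimpleGraph.Coloring.mk (fun v => ⟨c v, hlt v (mem_univ v)⟩) fun {u v} huv he =>
    hc u (mem_univ u) v (mem_univ v) huv (congrArg Fin.val he)⟩

theorem onlineChoiceNumber_eq_chromNum (h : OnlineChoosable G univ (fun _ => chromNum G)) :
    onlineChoiceNumber G = chromNum G :=
  le_antisymm (Nat.sInf_le h)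
    (le_csInf ⟨_, h⟩ fun _ hk => chromNum_le_of_colorable (colorable_of_onlineChoosable hk))

end ChromaticNumber

end OnlineOhba

open Finset in
theorem online_ohba_independence_three_reduction_general (G : SimpleGraph V)
    (C : G.Coloring (Fin (chromNum G))) (hC : ∀ i, #{v | C v = i} ≤ 3)
    (hcard : Fintype.card V ≤ 2 * chromNum G) :
    OnlineChoosable G Finset.univ (fun _ => chromNum G) ∧
    onlineChoiceNumber G = chromNum G ∧
    ∃ H : SimpleGraph V, G ≤ H ∧
      (∃ P : V → ℕ, (∀ u v, H.Adj u v ↔ P u ≠ P v) ∧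
        ∀ n : ℕ, (univ.filter fun v => P v = n).card ≤ 3) ∧
      Fintype.card V ≤ 2 * chromNum H := by
  have hchoosable := OnlineOhba.onlineChoosable_of_coloring C hC hcard
  have hle : G ≤ (⊤ : SimpleGraph (Fin (chromNum G))).comap C := fun _ _ => C.valid
  refine ⟨hchoosable, OnlineOhba.onlineChoiceNumber_eq_chromNum hchoosable, _, hle,
    ⟨fun v => C v, fun u v => Fin.val_injective.ne_iff.symm, fun n => ?_⟩,
    hcard.trans (Nat.mul_le_mul_left 2 (OnlineOhba.chromNum_mono hle))⟩
  obtain hempty | ⟨v, hv⟩ := (univ.filter fun v => (C v : ℕ) = n).eq_empty_or_nonempty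
  · simp [hempty]
  · simpa only [← (mem_filter.1 hv).2, Fin.val_inj] using hC (C v)

open Finset in
/-- If every independent set of `G` has size at most 3 and `|V(G)| ≤ 2χ(G)`, then `G` is
on-line `χ(G)`-choosable (hence `ch^OL(G) = χ(G)`).  Moreover the statement reduces to
complete multipartite graphs: there is a complete multipartite supergraph `H` of `G` on
the same vertex set with all parts of size at most 3 and `|V(G)| ≤ 2χ(H)`. -/
theorem online_ohba_independence_three_reduction (G : SimpleGraph V)
    (hInd : ∀ s : Finset V, (∀ u ∈ s, ∀ v ∈ s, ¬ G.Adj u v) → s.card ≤ 3)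
    (hcard : Fintype.card V ≤ 2 * chromNum G) :
    OnlineChoosable G Finset.univ (fun _ => chromNum G) ∧
    onlineChoiceNumber G = chromNum G ∧
    ∃ H : SimpleGraph V, G ≤ H ∧
      (∃ P : V → ℕ, (∀ u v, H.Adj u v ↔ P u ≠ P v) ∧
        ∀ n : ℕ, (univ.filter fun v => P v = n).card ≤ 3) ∧
      Fintype.card V ≤ 2 * chromNum H := by
  obtain ⟨C⟩ := OnlineOhba.colorable_chromNum G
  refine online_ohba_independence_three_reduction_general G C (fun i => ?_) hcard
  exact hInd _ fun u hu v hv =>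
    C.not_adj_of_mem_colorClass (mem_filter.1 hu).2 (mem_filter.1 hv).2
end
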